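/- arXiv:1203.1294 — 2 statements merged into one kernel-verified Lean document; each statement's English description precedes it below -/
import Mathlib

section
/- Let R be a Cohen–Macaulay local ring, X a resolving subcategory of mod R, and M a finitely generated R-module such that V(M) ⊆ V(X). If κ(p) belongs to add_{R_p}(X_p) for each p ∈ V(M), then M belongs to X. -/
/-!
Let `T` be the set of `t : R` for which multiplication by `t` on `M` factors through a finite free
module. If `M_p` is free, clearing denominators produces an element of `T` outside `p`, so every
prime containing `T` lies in `V(M)` (`exists_stablyZero`). Two facts then give the result.

*Every finite module killed by `T` lies in `𝒳`.* By prime filtrations (`mem_of_killed`) it suffices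
to treat `R ⧸ p` for primes `p ⊇ T`, by Noetherian induction from above. Since `κ(p) ∈ add 𝒳_p`,
there are `X ∈ 𝒳` and maps `R ⧸ p → X → R ⧸ p` with composite multiplication by some `t ∉ p`. The
pullback `{(y, c) | ψ y = t c}` has `R ⧸ p` as a direct summand, and it is the kernel of an
epimorphism from `X` onto a module killed by `p` and `t`, which lies in `𝒳` by induction
(`quotient_mem`).

*If finitely many elements `x₁, …, xₙ` of `T` are such that every finite module killed by all of
them lies in `𝒳`, then `M ∈ 𝒳`* (`mem_of_stablyZero`). For a cover `π : Y → N` with `Y ∈ 𝒳`, let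
`P` be the pullback of `π` along `x : N → N`. Whether `P ∈ 𝒳` is independent of the cover, and
the modules `N` with `P ∈ 𝒳` again form a resolving subcategory `pullbackCat R 𝒳 x`. It contains
`N` as soon as `𝒳` contains the submodules of `N / xN` and the kernel of `x` on `N`, because `P` is
an extension of `ker (Y → N / xN)` by that kernel. By induction on `n`, `M` lies in
`pullbackCat R 𝒳 xₙ`; and as `xₙ` factors through a free module on `M`, the projection `P → M`
splits, whence `M ∈ 𝒳`.
-/

open TensorProduct

noncomputable section

/-- The nonfree locus of a module: primes where the localization is a nonfree module. -/
def nonfreeLocus (R : Type) [CommRing R] (M : Type) [AddCommGroup M] [Module R M] :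
    Set (PrimeSpectrum R) :=
  {p | ¬ Module.Free (Localization.AtPrime p.asIdeal) (LocalizedModule p.asIdeal.primeCompl M)}

/-- The nonfree locus of a subcategory of `mod R`. -/
def catNonfreeLocus (R : Type) [CommRing R] (𝒳 : Set (ModuleCat.{0} R)) :
    Set (PrimeSpectrum R) :=
  ⋃ M ∈ 𝒳, nonfreeLocus R M

/-- A resolving subcategory of the category of finitely generated `R`-modules:
closed under isomorphism, consisting of finitely generated modules, containing `R`,
closed under direct summands, extensions and kernels of epimorphisms. -/
structure IsResolving (R : Type) [CommRing R] (𝒳 : Set (ModuleCat.{0} R)) : Prop where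
  fg : ∀ M ∈ 𝒳, Module.Finite R M
  mem_of_iso : ∀ M N : ModuleCat.{0} R, Nonempty (M ≃ₗ[R] N) → M ∈ 𝒳 → N ∈ 𝒳
  ring_mem : ModuleCat.of R R ∈ 𝒳
  summand_mem : ∀ M N : ModuleCat.{0} R,
    (∃ (i : N →ₗ[R] M) (p : M →ₗ[R] N), p ∘ₗ i = LinearMap.id) → M ∈ 𝒳 → N ∈ 𝒳
  extension_mem : ∀ (L M N : ModuleCat.{0} R) (f : L →ₗ[R] M) (g : M →ₗ[R] N),
    Function.Injective f → Function.Surjective g → Function.Exact f g →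
      L ∈ 𝒳 → N ∈ 𝒳 → M ∈ 𝒳
  ker_epi_mem : ∀ (L M N : ModuleCat.{0} R) (f : L →ₗ[R] M) (g : M →ₗ[R] N),
    Function.Injective f → Function.Surjective g → Function.Exact f g →
      M ∈ 𝒳 → N ∈ 𝒳 → L ∈ 𝒳

/-- Membership in the additive closure `add 𝒴` of a subcategory `𝒴` of `mod S`:
direct summands of finite direct sums of modules in `𝒴`. -/
def memAdd (S : Type) [CommRing S] (𝒴 : Set (ModuleCat.{0} S)) (N : Type)
    [AddCommGroup N] [Module S N] : Prop :=
  ∃ (n : ℕ) (Y : Fin n → ModuleCat.{0} S), (∀ i, Y i ∈ 𝒴) ∧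
    ∃ (s : N →ₗ[S] ((i : Fin n) → Y i)) (r : ((i : Fin n) → Y i) →ₗ[S] N),
      r ∘ₗ s = LinearMap.id

/-- The subcategory `𝒳_p` of `mod R_p` consisting of localizations of modules in `𝒳`. -/
def locCat (R : Type) [CommRing R] (𝒳 : Set (ModuleCat.{0} R)) (p : PrimeSpectrum R) :
    Set (ModuleCat.{0} (Localization.AtPrime p.asIdeal)) :=
  {N | ∃ X ∈ 𝒳, Nonempty
    (N ≃ₗ[Localization.AtPrime p.asIdeal] LocalizedModule p.asIdeal.primeCompl X)}

/-- `κ(p) ∈ add_{R_p} 𝒳_p`. -/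
def kappaMemAdd (R : Type) [CommRing R] (𝒳 : Set (ModuleCat.{0} R)) (p : PrimeSpectrum R) :
    Prop :=
  memAdd (Localization.AtPrime p.asIdeal) (locCat R 𝒳 p)
    (IsLocalRing.ResidueField (Localization.AtPrime p.asIdeal))

/-- A specialization-closed subset of `Spec R`. -/
def SpecClosed (R : Type) [CommRing R] (Φ : Set (PrimeSpectrum R)) : Prop :=
  ∀ p ∈ Φ, ∀ q : PrimeSpectrum R, p.asIdeal ≤ q.asIdeal → q ∈ Φ

/-- `s(R)`: the set of primes `p` such that `R_p` is not a field. -/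
def nonFieldLocus (R : Type) [CommRing R] : Set (PrimeSpectrum R) :=
  {p | ¬ IsField (Localization.AtPrime p.asIdeal)}

/-- A (Noetherian) local ring is regular iff its maximal ideal is generated by
`dim` many elements. -/
def IsRegularLoc (A : Type) [CommRing A] [IsLocalRing A] : Prop :=
  ∃ (n : ℕ) (x : Fin n → A), ringKrullDim A = (n : ℕ) ∧
    Ideal.span (Set.range x) = IsLocalRing.maximalIdeal A

/-- The singular locus of `R`. -/
def singLocus (R : Type) [CommRing R] : Set (PrimeSpectrum R) :=
  {p | ¬ IsRegularLoc (Localization.AtPrime p.asIdeal)}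

/-- `V^{-1}(Φ)`: finitely generated modules whose nonfree locus is contained in `Φ`. -/
def Vinv (R : Type) [CommRing R] (Φ : Set (PrimeSpectrum R)) : Set (ModuleCat.{0} R) :=
  {M | Module.Finite R M ∧ nonfreeLocus R M ⊆ Φ}

/-- The depth of a module: supremum of lengths of regular sequences in the maximal ideal. -/
def seqDepth (R : Type) [CommRing R] [IsLocalRing R] (M : Type) [AddCommGroup M]
    [Module R M] : ℕ∞ :=
  sSup {n : ℕ∞ | ∃ rs : List R, (rs.length : ℕ∞) = n ∧
    (∀ r ∈ rs, r ∈ IsLocalRing.maximalIdeal R) ∧ RingTheory.Sequence.IsRegular M rs}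

/-- A local ring is Cohen–Macaulay if its depth equals its Krull dimension. -/
def IsCMLocalRing (R : Type) [CommRing R] [IsLocalRing R] : Prop :=
  (seqDepth R R : WithBot ℕ∞) = ringKrullDim R

/-- A module over a local ring is Cohen–Macaulay ("maximal Cohen–Macaulay") if its depth
equals the Krull dimension of the ring. -/
def IsCMModule (R : Type) [CommRing R] [IsLocalRing R] (M : Type) [AddCommGroup M]
    [Module R M] : Prop :=
  (seqDepth R M : WithBot ℕ∞) = ringKrullDim R

/-- The subcategory `CM(R)` of `mod R` of (maximal) Cohen–Macaulay modules. -/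
def CMcat (R : Type) [CommRing R] [IsLocalRing R] : Set (ModuleCat.{0} R) :=
  {M | Module.Finite R M ∧ IsCMModule R M}

/-- `V_CM^{-1}(Φ)`: Cohen–Macaulay modules whose nonfree locus is contained in `Φ`. -/
def VinvCM (R : Type) [CommRing R] [IsLocalRing R] (Φ : Set (PrimeSpectrum R)) :
    Set (ModuleCat.{0} R) :=
  {M | Module.Finite R M ∧ IsCMModule R M ∧ nonfreeLocus R M ⊆ Φ}

/-- `IsSyzygyOf R n M S` : `S` is an `n`-th syzygy of `M` in a minimal free resolution,
i.e. `S ≅ Ω^n M`. -/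
def IsSyzygyOf (R : Type) [CommRing R] [IsLocalRing R] :
    ℕ → ModuleCat.{0} R → ModuleCat.{0} R → Prop
  | 0, M, S => Nonempty (S ≃ₗ[R] M)
  | n + 1, M, S => ∃ (m : ℕ) (π : (Fin m → R) →ₗ[R] M), Function.Surjective π ∧
      LinearMap.ker π ≤ (IsLocalRing.maximalIdeal R) • (⊤ : Submodule R (Fin m → R)) ∧
      IsSyzygyOf R n (ModuleCat.of R (LinearMap.ker π)) S

/-- `IsTransposeOf R X M T` : `T` is (isomorphic to) the transpose `tr_X M` of `M`
with respect to `X`, computed from a minimal free presentation of `M`. -/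
def IsTransposeOf (R : Type) [CommRing R] [IsLocalRing R] (X : Type) [AddCommGroup X]
    [Module R X] (M : Type) [AddCommGroup M] [Module R M] (T : Type) [AddCommGroup T]
    [Module R T] : Prop :=
  ∃ (n m : ℕ) (dl : (Fin n → R) →ₗ[R] (Fin m → R)) (π : (Fin m → R) →ₗ[R] M),
    Function.Surjective π ∧ Function.Exact dl π ∧
    LinearMap.ker π ≤ (IsLocalRing.maximalIdeal R) • (⊤ : Submodule R (Fin m → R)) ∧
    LinearMap.ker dl ≤ (IsLocalRing.maximalIdeal R) • (⊤ : Submodule R (Fin n → R)) ∧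
    Nonempty (T ≃ₗ[R]
      (((Fin n → R) →ₗ[R] X) ⧸ LinearMap.range (LinearMap.lcomp R X dl)))

/-- `𝒳` is closed under tensor products. -/
def ClosedUnderTensor (R : Type) [CommRing R] (𝒳 : Set (ModuleCat.{0} R)) : Prop :=
  ∀ X ∈ 𝒳, ∀ Y ∈ 𝒳, ModuleCat.of R (TensorProduct R X Y) ∈ 𝒳

/-- `𝒳` is closed under (Auslander) transposes. -/
def ClosedUnderTranspose (R : Type) [CommRing R] [IsLocalRing R]
    (𝒳 : Set (ModuleCat.{0} R)) : Prop :=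
  ∀ M ∈ 𝒳, ∀ T : ModuleCat.{0} R, IsTransposeOf R R M T → T ∈ 𝒳


/-- The subcategory `add R` of direct summands of finitely generated free modules. -/
def addRCat (R : Type) [CommRing R] : Set (ModuleCat.{0} R) :=
  {M | ∃ (n : ℕ) (i : M →ₗ[R] (Fin n → R)) (p : (Fin n → R) →ₗ[R] M),
    p ∘ₗ i = LinearMap.id}

/-- A thick subcategory of `CM(R)`: closed under isomorphisms and direct summands, and
satisfying two-out-of-three for short exact sequences of Cohen-Macaulay modules. -/
structure IsThickCM (R : Type) [CommRing R] [IsLocalRing R]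
    (𝒳 : Set (ModuleCat.{0} R)) : Prop where
  subset_cm : 𝒳 ⊆ CMcat R
  mem_of_iso : ∀ M N : ModuleCat.{0} R, Nonempty (M ≃ₗ[R] N) → M ∈ 𝒳 → N ∈ 𝒳
  summand_mem : ∀ M N : ModuleCat.{0} R,
    (∃ (i : N →ₗ[R] M) (p : M →ₗ[R] N), p ∘ₗ i = LinearMap.id) → M ∈ 𝒳 → N ∈ 𝒳
  two_of_three : ∀ (L M N : ModuleCat.{0} R), L ∈ CMcat R → M ∈ CMcat R → N ∈ CMcat R →
    ∀ (f : L →ₗ[R] M) (g : M →ₗ[R] N),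
      Function.Injective f → Function.Surjective g → Function.Exact f g →
        ((L ∈ 𝒳 → M ∈ 𝒳 → N ∈ 𝒳) ∧ (L ∈ 𝒳 → N ∈ 𝒳 → M ∈ 𝒳) ∧ (M ∈ 𝒳 → N ∈ 𝒳 → L ∈ 𝒳))

/-- A local ring with infinite residue field has minimal multiplicity iff the square of the
maximal ideal equals `Q * m` for a parameter ideal `Q = (x_1, …, x_d)` generated by
`d = dim` many elements of `m`. -/
def HasMinimalMultiplicity (A : Type) [CommRing A] [IsLocalRing A] : Prop :=
  ∃ (n : ℕ) (x : Fin n → A), ringKrullDim A = (n : ℕ) ∧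
    (∀ i, x i ∈ IsLocalRing.maximalIdeal A) ∧
    (IsLocalRing.maximalIdeal A) ^ 2 =
      Ideal.span (Set.range x) * IsLocalRing.maximalIdeal A

/-! ### Elementary closure properties of resolving subcategories -/

namespace IsResolving

variable {R : Type} [CommRing R] {𝒳 : Set (ModuleCat.{0} R)}

lemma subsingleton_mem (h : IsResolving R 𝒳) (N : Type) [AddCommGroup N] [Module R N]
    [Subsingleton N] : ModuleCat.of R N ∈ 𝒳 :=
  h.summand_mem (ModuleCat.of R R) (ModuleCat.of R N)
    ⟨0, 0, LinearMap.ext fun _ => Subsingleton.elim (α := N) _ _⟩ h.ring_mem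

lemma pi_mem (h : IsResolving R 𝒳) : ∀ (n : ℕ) (X : Fin n → ModuleCat.{0} R),
    (∀ i, X i ∈ 𝒳) → ModuleCat.of R ((i : Fin n) → X i) ∈ 𝒳
  | 0, _, _ => h.subsingleton_mem _
  | n + 1, X, hX => by
      refine h.extension_mem (X 0) (ModuleCat.of R ((i : Fin (n + 1)) → X i))
        (ModuleCat.of R ((i : Fin n) → X i.succ))
        (LinearMap.single R (fun i => (X i : Type)) 0)
        (LinearMap.pi fun i => LinearMap.proj i.succ) ?_ ?_ ?_ (hX 0)
        (h.pi_mem n _ fun i => hX i.succ)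
      · exact Pi.single_injective (M := fun i => (X i : Type)) 0
      · intro y
        refine ⟨Fin.cons (α := fun i => (X i : Type)) 0 y, ?_⟩
        funext i
        exact Fin.cons_succ (α := fun i => (X i : Type)) 0 y i
      · intro y
        constructor
        · intro hy
          refine ⟨y 0, ?_⟩
          funext i
          refine Fin.cases ?_ (fun j => ?_) i
          · exact Pi.single_eq_same (M := fun i => (X i : Type)) 0 _
          · exact (Pi.single_eq_of_ne (M := fun i => (X i : Type)) (Fin.succ_ne_zero j) (y 0)).trans
              (congrFun hy j).symm
        · rintro ⟨z, rfl⟩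
          funext j
          exact Pi.single_eq_of_ne (M := fun i => (X i : Type)) (Fin.succ_ne_zero j) z

lemma free_mem (h : IsResolving R 𝒳) (n : ℕ) : ModuleCat.of R (Fin n → R) ∈ 𝒳 :=
  h.pi_mem n (fun _ => ModuleCat.of R R) fun _ => h.ring_mem

lemma prod_mem (h : IsResolving R 𝒳) {A B : Type} [AddCommGroup A] [Module R A]
    [AddCommGroup B] [Module R B] (hA : ModuleCat.of R A ∈ 𝒳) (hB : ModuleCat.of R B ∈ 𝒳) :
    ModuleCat.of R (A × B) ∈ 𝒳 :=
  h.extension_mem (ModuleCat.of R A) (ModuleCat.of R (A × B)) (ModuleCat.of R B)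
    (LinearMap.inl R A B) (LinearMap.snd R A B) LinearMap.inl_injective
    LinearMap.snd_surjective .inl_snd hA hB

end IsResolving

/-! ### The pullback of a cover along multiplication by a ring element -/

/-- The pullback of `π : Y → N` along multiplication by `x` on `N`,
realised as `{(y, n) | π y = x n}` inside `Y × N`. -/
def smulPullback {R : Type} [CommRing R] {Y N : Type} [AddCommGroup Y] [Module R Y]
    [AddCommGroup N] [Module R N] (π : Y →ₗ[R] N) (x : R) : Submodule R (Y × N) :=
  LinearMap.ker (π ∘ₗ LinearMap.fst R Y N - x • LinearMap.snd R Y N)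

lemma mem_smulPullback {R : Type} [CommRing R] {Y N : Type} [AddCommGroup Y] [Module R Y]
    [AddCommGroup N] [Module R N] (π : Y →ₗ[R] N) (x : R) (z : Y × N) :
    z ∈ smulPullback π x ↔ π z.1 = x • z.2 := by
  simp [smulPullback, sub_eq_zero]

/-- The modules `N` such that every pullback of a cover of `N` by an object of `𝒳` along
multiplication by `x` lies in `𝒳`. -/
def pullbackCat (R : Type) [CommRing R] (𝒳 : Set (ModuleCat.{0} R)) (x : R) :
    Set (ModuleCat.{0} R) :=
  {N | Module.Finite R N ∧ ∀ (Y : Type) [AddCommGroup Y] [Module R Y] (π : Y →ₗ[R] N),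
    ModuleCat.of R Y ∈ 𝒳 → Function.Surjective π → ModuleCat.of R (smulPullback π x) ∈ 𝒳}

section Pullback

variable {R : Type} [CommRing R] {𝒳 : Set (ModuleCat.{0} R)}

/-- If `Y → N` and `Z → N` are covers by objects of `𝒳`, then the pullback for
`Y × Z → N` is an extension of `Z` by the pullback for `Y → N`, and symmetrically. So whether
the pullback lies in `𝒳` does not depend on the cover. -/
lemma smulPullback_mem_of_mem (h : IsResolving R 𝒳) {Y Z N : Type} [AddCommGroup Y]
    [Module R Y] [AddCommGroup Z] [Module R Z] [AddCommGroup N] [Module R N]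
    (π : Y →ₗ[R] N) (ρ : Z →ₗ[R] N) (x : R) (hY : ModuleCat.of R Y ∈ 𝒳)
    (hZ : ModuleCat.of R Z ∈ 𝒳) (hπ : Function.Surjective π) (hρ : Function.Surjective ρ)
    (hP : ModuleCat.of R (smulPullback π x) ∈ 𝒳) :
    ModuleCat.of R (smulPullback ρ x) ∈ 𝒳 := by
  let Q := smulPullback (π.coprod ρ) x
  have hQ : ModuleCat.of R Q ∈ 𝒳 := by
    refine h.extension_mem (ModuleCat.of R (smulPullback π x)) (ModuleCat.of R Q)
      (ModuleCat.of R Z)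
      ((LinearMap.prodMap (LinearMap.inl R Y Z) LinearMap.id).restrict
        (p := smulPullback π x) (q := Q) ?_)
      (LinearMap.snd R Y Z ∘ₗ LinearMap.fst R (Y × Z) N ∘ₗ Q.subtype) ?_ ?_ ?_ hP hZ
    · rintro ⟨y, n⟩ hz
      simpa [Q, mem_smulPullback] using hz
    · rintro ⟨⟨y, n⟩, hz⟩ ⟨⟨y', n'⟩, hz'⟩ e
      simpa [LinearMap.restrict_apply] using e
    · intro z
      obtain ⟨y, hy⟩ := hπ (- ρ z)
      exact ⟨⟨((y, z), 0), by simp [Q, mem_smulPullback, hy]⟩, rfl⟩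
    · rintro ⟨⟨⟨y, z⟩, n⟩, hz⟩
      constructor
      · intro (hz0 : z = 0)
        subst hz0
        exact ⟨⟨(y, n), by simpa [Q, mem_smulPullback] using hz⟩, rfl⟩
      · rintro ⟨⟨⟨y', n'⟩, hz'⟩, e⟩
        simp only [LinearMap.restrict_apply, Subtype.mk.injEq, LinearMap.prodMap_apply,
          LinearMap.inl_apply, Prod.mk.injEq] at e
        exact e.1.2.symm
  refine h.ker_epi_mem (ModuleCat.of R (smulPullback ρ x)) (ModuleCat.of R Q)
      (ModuleCat.of R Y)
      ((LinearMap.prodMap (LinearMap.inr R Y Z) LinearMap.id).restrict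
        (p := smulPullback ρ x) (q := Q) ?_)
      (LinearMap.fst R Y Z ∘ₗ LinearMap.fst R (Y × Z) N ∘ₗ Q.subtype) ?_ ?_ ?_ hQ hY
  · rintro ⟨y, n⟩ hz
    simpa [Q, mem_smulPullback] using hz
  · rintro ⟨⟨y, n⟩, hz⟩ ⟨⟨y', n'⟩, hz'⟩ e
    simpa [LinearMap.restrict_apply] using e
  · intro y
    obtain ⟨z, hz⟩ := hρ (- π y)
    exact ⟨⟨((y, z), 0), by simp [Q, mem_smulPullback, hz]⟩, rfl⟩
  · rintro ⟨⟨⟨y, z⟩, n⟩, hz⟩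
    constructor
    · intro (hz0 : y = 0)
      subst hz0
      exact ⟨⟨(z, n), by simpa [Q, mem_smulPullback] using hz⟩, rfl⟩
    · rintro ⟨⟨⟨y', n'⟩, hz'⟩, e⟩
      simp only [LinearMap.restrict_apply, Subtype.mk.injEq, LinearMap.prodMap_apply,
        LinearMap.inr_apply, Prod.mk.injEq] at e
      exact e.1.1.symm

lemma mem_pullbackCat_of_cover (h : IsResolving R 𝒳) (x : R) (N : ModuleCat.{0} R)
    (hN : Module.Finite R N) {Y : Type} [AddCommGroup Y] [Module R Y] (π : Y →ₗ[R] N)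
    (hY : ModuleCat.of R Y ∈ 𝒳) (hπ : Function.Surjective π)
    (hP : ModuleCat.of R (smulPullback π x) ∈ 𝒳) : N ∈ pullbackCat R 𝒳 x :=
  ⟨hN, fun _ _ _ ρ hZ hρ => smulPullback_mem_of_mem h π ρ x hY hZ hπ hρ hP⟩

/-- For `0 → L → M → N → 0` exact, a cover `Y → L` and a map `Z → M`, the pullbacks for `Y → L`,
`Y × Z → M` and `Z → N` form a short exact sequence. -/
lemma smulPullback_exact {L M N Y Z : Type} [AddCommGroup L] [Module R L] [AddCommGroup M]
    [Module R M] [AddCommGroup N] [Module R N] [AddCommGroup Y] [Module R Y] [AddCommGroup Z]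
    [Module R Z] (f : L →ₗ[R] M) (g : M →ₗ[R] N) (hf : Function.Injective f)
    (hg : Function.Surjective g) (hfg : Function.Exact f g) (π : Y →ₗ[R] L) (ρ : Z →ₗ[R] M)
    (hπ : Function.Surjective π) (x : R) :
    ∃ (a : smulPullback π x →ₗ[R] smulPullback ((f ∘ₗ π).coprod ρ) x)
      (b : smulPullback ((f ∘ₗ π).coprod ρ) x →ₗ[R] smulPullback (g ∘ₗ ρ) x),
      Function.Injective a ∧ Function.Surjective b ∧ Function.Exact a b := by
  have hgf : ∀ l, g (f l) = 0 := hfg.apply_apply_eq_zero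
  refine ⟨(LinearMap.prodMap (LinearMap.inl R Y Z) f).restrict ?_,
    (LinearMap.prodMap (LinearMap.snd R Y Z) g).restrict ?_, ?_, ?_, ?_⟩
  · rintro ⟨y, n⟩ hz
    rw [mem_smulPullback] at hz ⊢
    simpa using congrArg f hz
  · rintro ⟨⟨y, z⟩, m⟩ hz
    rw [mem_smulPullback] at hz ⊢
    simpa [hgf] using congrArg g hz
  · rintro ⟨⟨y, n⟩, hz⟩ ⟨⟨y', n'⟩, hz'⟩ e
    simpa [LinearMap.restrict_apply, hf.eq_iff] using e
  · rintro ⟨⟨z, n⟩, hz⟩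
    rw [mem_smulPullback] at hz
    obtain ⟨m, rfl⟩ := hg n
    have h0 : g (x • m - ρ z) = 0 := by
      have : g (ρ z) = x • g m := hz
      simp [this]
    obtain ⟨l, hl⟩ := (hfg _).1 h0
    obtain ⟨y, rfl⟩ := hπ l
    refine ⟨⟨((y, z), m), ?_⟩, rfl⟩
    rw [mem_smulPullback]
    simp [hl]
  · rintro ⟨⟨⟨y, z⟩, m⟩, hz⟩
    constructor
    · intro e
      have e1 : z = 0 ∧ g m = 0 := by simpa [LinearMap.restrict_apply] using e
      obtain ⟨rfl, e2⟩ := e1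
      obtain ⟨l, rfl⟩ := (hfg _).1 e2
      refine ⟨⟨(y, l), ?_⟩, rfl⟩
      rw [mem_smulPullback] at hz ⊢
      apply hf
      simpa using hz
    · rintro ⟨⟨⟨y', n'⟩, hz'⟩, e⟩
      rw [← e]
      simp [LinearMap.restrict_apply, hgf]

lemma isResolving_pullbackCat [IsNoetherianRing R] (h : IsResolving R 𝒳) (x : R) :
    IsResolving R (pullbackCat R 𝒳 x) where
  fg := fun M hM => hM.1
  mem_of_iso := by
    rintro M N ⟨e⟩ ⟨hM, hM'⟩
    have hN : Module.Finite R N := Module.Finite.equiv e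
    refine ⟨hN, fun Y _ _ π hY hπ => ?_⟩
    refine h.mem_of_iso _ _ ⟨?_⟩ (hM' Y (e.symm.toLinearMap ∘ₗ π) hY
      (e.symm.surjective.comp hπ))
    refine (LinearEquiv.prodCongr (LinearEquiv.refl R Y) e).ofSubmodules _ _ ?_
    ext ⟨y, n⟩
    rw [Submodule.mem_map_equiv]
    simp only [mem_smulPullback]
    simp [← map_smul]
  ring_mem := by
    refine mem_pullbackCat_of_cover h x (ModuleCat.of R R) (Module.Finite.self R)
      (LinearMap.id : R →ₗ[R] R) h.ring_mem Function.surjective_id ?_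
    refine h.mem_of_iso (ModuleCat.of R R) _ ⟨?_⟩ h.ring_mem
    refine LinearEquiv.ofBijective
      ((LinearMap.prod (x • LinearMap.id) LinearMap.id : R →ₗ[R] R × R).codRestrict
        (smulPullback LinearMap.id x) fun c => by simp [mem_smulPullback]) ⟨?_, ?_⟩
    · intro c d e
      exact congrArg (fun z => z.1.2) e
    · rintro ⟨⟨c, d⟩, hz⟩
      refine ⟨d, ?_⟩
      rw [mem_smulPullback] at hz
      have hz' : c = x • d := hz
      subst hz'
      rfl
  summand_mem := by
    rintro M N ⟨i, p, hpi⟩ ⟨hM, hM'⟩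
    have hpi' : ∀ n, p (i n) = n := fun n => LinearMap.congr_fun hpi n
    have hN : Module.Finite R N := Module.Finite.of_surjective p fun n => ⟨i n, hpi' n⟩
    refine ⟨hN, fun Y _ _ π hY hπ => ?_⟩
    obtain ⟨k, ρ, hρ⟩ := Module.Finite.exists_fin' R M
    -- A cover of `M` that restricts to `π` on the summand `N`.
    let σ : Y × (Fin k → R) →ₗ[R] M :=
      (i ∘ₗ π).coprod ((LinearMap.id - i ∘ₗ p) ∘ₗ ρ)
    have hσ : Function.Surjective σ := by
      intro m
      obtain ⟨y, hy⟩ := hπ (p m)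
      obtain ⟨z, hz⟩ := hρ m
      exact ⟨(y, z), by simp [σ, hy, hz]⟩
    refine h.summand_mem _ _ ⟨?_, ?_, ?_⟩ (hM' _ σ (h.prod_mem hY (h.free_mem k)) hσ)
    · refine (LinearMap.prodMap (LinearMap.inl R Y (Fin k → R)) i).restrict
        (p := smulPullback π x) (q := smulPullback σ x) ?_
      rintro ⟨y, n⟩ hz
      rw [mem_smulPullback] at hz ⊢
      simpa [σ] using congrArg i hz
    · refine (LinearMap.prodMap (LinearMap.fst R Y (Fin k → R)) p).restrict
        (p := smulPullback σ x) (q := smulPullback π x) ?_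
      rintro ⟨⟨y, z⟩, m⟩ hz
      rw [mem_smulPullback] at hz ⊢
      simpa [σ, hpi'] using congrArg p hz
    · ext z
      · rfl
      · exact hpi' _
  extension_mem := by
    rintro L M N f g hf hg hfg ⟨hL, hL'⟩ ⟨hN, hN'⟩
    have hM : Module.Finite R M := by
      have : Module.Finite R (LinearMap.range f) := inferInstance
      have : Module.Finite R (LinearMap.ker g) := by
        rwa [LinearMap.exact_iff.1 hfg]
      have : Module.Finite R (M ⧸ LinearMap.ker g) :=
        Module.Finite.equiv (g.quotKerEquivOfSurjective hg).symm
      exact Module.Finite.of_submodule_quotient (LinearMap.ker g)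
    obtain ⟨k, π, hπ⟩ := Module.Finite.exists_fin' R L
    obtain ⟨l, ρ, hρ⟩ := Module.Finite.exists_fin' R M
    obtain ⟨a, b, ha, hb, hab⟩ := smulPullback_exact f g hf hg hfg π ρ hπ x
    refine mem_pullbackCat_of_cover h x M hM ((f ∘ₗ π).coprod ρ)
      (h.prod_mem (h.free_mem k) (h.free_mem l)) ?_
      (h.extension_mem _ (ModuleCat.of R _) _ a b ha hb hab
        (hL' _ π (h.free_mem k) hπ) (hN' _ (g ∘ₗ ρ) (h.free_mem l) (hg.comp hρ)))
    intro m
    obtain ⟨z, hz⟩ := hρ m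
    exact ⟨(0, z), by simp [hz]⟩
  ker_epi_mem := by
    rintro L M N f g hf hg hfg ⟨hM, hM'⟩ ⟨hN, hN'⟩
    have hL : Module.Finite R L := Module.Finite.of_injective f hf
    obtain ⟨k, π, hπ⟩ := Module.Finite.exists_fin' R L
    obtain ⟨l, ρ, hρ⟩ := Module.Finite.exists_fin' R M
    obtain ⟨a, b, ha, hb, hab⟩ := smulPullback_exact f g hf hg hfg π ρ hπ x
    refine mem_pullbackCat_of_cover h x L hL π (h.free_mem k) hπ
      (h.ker_epi_mem (ModuleCat.of R _) _ _ a b ha hb hab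
        (hM' _ ((f ∘ₗ π).coprod ρ) (h.prod_mem (h.free_mem k) (h.free_mem l)) ?_)
        (hN' _ (g ∘ₗ ρ) (h.free_mem l) (hg.comp hρ)))
    intro m
    obtain ⟨z, hz⟩ := hρ m
    exact ⟨(0, z), by simp [hz]⟩

/-- The pullback for `π : Y → N` and `x` is an extension of `ker (Y → N / xN)` by the
`x`-torsion of `N`. -/
lemma smulPullback_mem (h : IsResolving R 𝒳) {Y N : Type} [AddCommGroup Y] [Module R Y]
    [AddCommGroup N] [Module R N] (π : Y →ₗ[R] N) (x : R) (hY : ModuleCat.of R Y ∈ 𝒳)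
    (htor : ModuleCat.of R (LinearMap.ker (x • (LinearMap.id : N →ₗ[R] N))) ∈ 𝒳)
    (hquot : ModuleCat.of R (LinearMap.range
      ((LinearMap.range (x • (LinearMap.id : N →ₗ[R] N))).mkQ ∘ₗ π)) ∈ 𝒳) :
    ModuleCat.of R (smulPullback π x) ∈ 𝒳 := by
  let q := (LinearMap.range (x • (LinearMap.id : N →ₗ[R] N))).mkQ ∘ₗ π
  have hmem : ∀ y, y ∈ LinearMap.ker q ↔ ∃ n, x • n = π y := fun y => by
    simp [q, LinearMap.mem_ker]
  have hker : ModuleCat.of R (LinearMap.ker q) ∈ 𝒳 :=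
    h.ker_epi_mem (ModuleCat.of R (LinearMap.ker q)) (ModuleCat.of R Y)
      (ModuleCat.of R (LinearMap.range q)) (LinearMap.ker q).subtype q.rangeRestrict
      Subtype.val_injective q.surjective_rangeRestrict
      (LinearMap.exact_iff.2 (by simp)) hY hquot
  refine h.extension_mem (ModuleCat.of R (LinearMap.ker (x • (LinearMap.id : N →ₗ[R] N))))
    (ModuleCat.of R (smulPullback π x)) (ModuleCat.of R (LinearMap.ker q))
    ((LinearMap.inr R Y N).restrict (q := smulPullback π x) ?_)
    ((LinearMap.fst R Y N).restrict (p := smulPullback π x) ?_) ?_ ?_ ?_ htor hker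
  · intro n hn
    rw [mem_smulPullback]
    simpa [eq_comm] using hn
  · intro z hz
    rw [mem_smulPullback] at hz
    exact (hmem _).2 ⟨z.2, hz.symm⟩
  · rintro ⟨n, hn⟩ ⟨n', hn'⟩ e
    simpa [LinearMap.restrict_apply] using e
  · rintro ⟨y, hy⟩
    obtain ⟨n, hn⟩ := (hmem y).1 hy
    exact ⟨⟨(y, n), (mem_smulPullback _ _ _).2 hn.symm⟩, rfl⟩
  · rintro ⟨⟨y, n⟩, hz⟩
    rw [mem_smulPullback] at hz
    constructor
    · intro e
      have e' : y = 0 := congrArg Subtype.val e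
      subst e'
      exact ⟨⟨n, by simpa [eq_comm] using hz⟩, rfl⟩
    · rintro ⟨⟨n', hn'⟩, e⟩
      have e' : (0 : Y) = y := congrArg (fun z => z.1.1) e
      exact Subtype.ext e'.symm

end Pullback

/-! ### Multiplications factoring through free modules -/

/-- Multiplication by `t` on `M` factors through a finite free module. -/
def StablyZero (R : Type) [CommRing R] (M : Type) [AddCommGroup M] [Module R M] (t : R) : Prop :=
  ∃ (n : ℕ) (a : M →ₗ[R] (Fin n → R)) (b : (Fin n → R) →ₗ[R] M), b ∘ₗ a = t • LinearMap.id

/-- If finitely many ring elements act stably as zero on `M`, and every finite module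
killed by all of them lies in `𝒳`, then `M ∈ 𝒳`. For the inductive step, an element `r` is
traded for the replacement of `𝒳` by `pullbackCat R 𝒳 r`: this contains all finite modules killed
by the remaining elements, and if it contains `M` then `M`, being a summand of a pullback
along `r`, lies in `𝒳`. -/
lemma mem_of_stablyZero {R : Type} [CommRing R] [IsNoetherianRing R] (M : ModuleCat.{0} R)
    (hM : Module.Finite R M) (l : List R) (hl : ∀ r ∈ l, StablyZero R M r) :
    ∀ (𝒳 : Set (ModuleCat.{0} R)), IsResolving R 𝒳 →
      (∀ (N : Type) [AddCommGroup N] [Module R N], Module.Finite R N →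
        (∀ r ∈ l, ∀ n : N, r • n = 0) → ModuleCat.of R N ∈ 𝒳) → M ∈ 𝒳 := by
  induction l with
  | nil => exact fun 𝒳 _ h => h M hM fun r hr => absurd hr List.not_mem_nil
  | cons r l ih =>
    intro 𝒳 h𝒳 h
    have hmem : M ∈ pullbackCat R 𝒳 r := by
      refine ih (fun s hs => hl s (List.mem_cons_of_mem _ hs)) _
        (isResolving_pullbackCat h𝒳 r) ?_
      intro N _ _ hN hkill
      refine ⟨hN, fun Y _ _ π hY hπ => ?_⟩
      have : IsNoetherian R N := isNoetherian_of_isNoetherianRing_of_finite R N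
      refine smulPullback_mem h𝒳 π r hY (h _ inferInstance ?_) (h _ inferInstance ?_)
      · rintro s hs ⟨n, hn⟩
        apply Subtype.ext
        rcases List.mem_cons.1 hs with rfl | hs
        · simpa using hn
        · exact hkill s hs n
      · rintro s hs ⟨n, hn⟩
        apply Subtype.ext
        change s • n = 0
        obtain ⟨n, rfl⟩ := Submodule.mkQ_surjective _ n
        rw [← map_smul]
        rcases List.mem_cons.1 hs with rfl | hs
        · rw [Submodule.mkQ_apply, Submodule.Quotient.mk_eq_zero]
          exact ⟨n, rfl⟩
        · rw [hkill s hs n, map_zero]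
    obtain ⟨k, π, hπ⟩ := Module.Finite.exists_fin' R M
    obtain ⟨n, a, b, hab⟩ := hl r List.mem_cons_self
    obtain ⟨c, hc⟩ := Module.projective_lifting_property π b hπ
    refine h𝒳.summand_mem _ M ⟨?_, ?_, ?_⟩ (hmem.2 _ π (h𝒳.free_mem k) hπ)
    · refine (LinearMap.prod (c ∘ₗ a) LinearMap.id).codRestrict (smulPullback π r) fun m => ?_
      rw [mem_smulPullback]
      have h1 : π (c (a m)) = b (a m) := LinearMap.congr_fun hc (a m)
      have h2 : b (a m) = r • m := LinearMap.congr_fun hab m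
      exact h1.trans h2
    · exact LinearMap.snd R _ _ ∘ₗ (smulPullback π r).subtype
    · rfl

/-- If `M_p` is free, some `t ∉ p` acts stably as zero on `M`. -/
lemma exists_stablyZero {R : Type} [CommRing R] [IsNoetherianRing R] (M : Type)
    [AddCommGroup M] [Module R M] [Module.Finite R M] (p : PrimeSpectrum R)
    (hp : p ∉ nonfreeLocus R M) : ∃ t, t ∉ p.asIdeal ∧ StablyZero R M t := by
  have hfree : Module.Free (Localization.AtPrime p.asIdeal)
    (LocalizedModule p.asIdeal.primeCompl M) := not_not.1 hp
  let S := p.asIdeal.primeCompl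
  let Rp := Localization.AtPrime p.asIdeal
  let Mp := LocalizedModule S M
  have : Module.Finite Rp Mp := inferInstance
  obtain ⟨n, ⟨e⟩⟩ : ∃ n : ℕ, Nonempty (Mp ≃ₗ[Rp] (Fin n → Rp)) :=
    ⟨_, ⟨(Module.finBasis Rp Mp).equivFun⟩⟩
  let ι : (Fin n → R) →ₗ[R] (Fin n → Rp) :=
    .pi fun i ↦ Algebra.linearMap R Rp ∘ₗ .proj i
  have : IsLocalizedModule S ι := inferInstance
  have : Module.FinitePresentation R M := Module.finitePresentation_of_finite R M
  let μ := LocalizedModule.mkLinearMap S M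
  obtain ⟨a, u, ha⟩ := Module.FinitePresentation.exists_lift_of_isLocalizedModule S ι
    ((e.toLinearMap.restrictScalars R) ∘ₗ μ)
  obtain ⟨b, w, hb⟩ := Module.FinitePresentation.exists_lift_of_isLocalizedModule S μ
    ((e.symm.toLinearMap.restrictScalars R) ∘ₗ ι)
  have key : μ ∘ₗ (b ∘ₗ a) = μ ∘ₗ ((w * u : S) • LinearMap.id) := by
    ext m
    have h1 : ι (a m) = u • e (μ m) := LinearMap.congr_fun ha m
    have h2 : μ (b (a m)) = w • e.symm (ι (a m)) := LinearMap.congr_fun hb (a m)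
    have h3 : e.symm (u • e (μ m)) = u • μ m := by
      change (e.symm.toLinearMap.restrictScalars R) ((u : R) • e (μ m)) = _
      rw [map_smul]
      simp [Submonoid.smul_def]
    simp only [LinearMap.comp_apply, h2, h1, h3, LinearMap.smul_apply, LinearMap.id_apply]
    simp [Submonoid.smul_def, mul_smul]
  obtain ⟨v, hv⟩ := Module.Finite.exists_smul_of_comp_eq_of_isLocalizedModule S μ _ _ key
  refine ⟨(v * (w * u) : S), (v * (w * u) : S).2, n, a, (v : R) • b, ?_⟩
  ext m
  have := LinearMap.congr_fun hv m
  simpa [Submonoid.smul_def, mul_smul] using this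

/-! ### Cyclic modules `R ⧸ p` -/

/-- By prime filtrations, `𝒳` contains every finite module killed by `J` as soon as it
contains `R ⧸ q` for all primes `q ⊇ J`. -/
lemma mem_of_killed {R : Type} [CommRing R] [IsNoetherianRing R] {𝒳 : Set (ModuleCat.{0} R)}
    (h𝒳 : IsResolving R 𝒳) (J : Set R)
    (hJ : ∀ q : PrimeSpectrum R, J ⊆ q.asIdeal → ModuleCat.of R (R ⧸ q.asIdeal) ∈ 𝒳)
    (N : Type) [AddCommGroup N] [Module R N] (hN : Module.Finite R N)
    (hkill : ∀ r ∈ J, ∀ n : N, r • n = 0) : ModuleCat.of R N ∈ 𝒳 := by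
  revert hkill
  refine IsNoetherianRing.induction_on_isQuotientEquivQuotientPrime R hN
    (motive := fun N _ _ _ => (∀ r ∈ J, ∀ n : N, r • n = 0) → ModuleCat.of R N ∈ 𝒳) ?_ ?_ ?_
  · intro N _ _ _ _ _
    exact h𝒳.subsingleton_mem N
  · intro N _ _ _ p e hk
    refine h𝒳.mem_of_iso (ModuleCat.of R (R ⧸ p.asIdeal)) (ModuleCat.of R N) ⟨e.symm⟩
      (hJ p fun r hr => ?_)
    have h0 : r • (1 : R ⧸ p.asIdeal) = 0 := by
      rw [← e.apply_symm_apply 1, ← map_smul, hk r hr, map_zero]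
    have h1 : (Ideal.Quotient.mk p.asIdeal) r = 0 := by
      simpa [Algebra.smul_def] using h0
    exact Ideal.Quotient.eq_zero_iff_mem.1 h1
  · intro N₁ _ _ _ N₂ _ _ _ N₃ _ _ _ f g hf hg hfg h₁ h₃ hk
    refine h𝒳.extension_mem (ModuleCat.of R N₁) (ModuleCat.of R N₂) (ModuleCat.of R N₃) f g
      hf hg hfg (h₁ fun r hr n => hf ?_) (h₃ fun r hr n => ?_)
    · rw [map_smul, hk r hr, map_zero]
    · obtain ⟨m, rfl⟩ := hg n
      rw [← map_smul, hk r hr, map_zero]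

/-- If `κ(p)` is a summand of `X_p`, clearing denominators gives maps
`R ⧸ p → X → R ⧸ p` whose composite is multiplication by some `t ∉ p`. -/
lemma exists_smul_factor {R : Type} [CommRing R] [IsNoetherianRing R]
    {𝒳 : Set (ModuleCat.{0} R)} (h𝒳 : IsResolving R 𝒳) (p : PrimeSpectrum R)
    (hp : kappaMemAdd R 𝒳 p) :
    ∃ X ∈ 𝒳, ∃ (φ : R ⧸ p.asIdeal →ₗ[R] X) (ψ : X →ₗ[R] R ⧸ p.asIdeal) (t : R),
      t ∉ p.asIdeal ∧ ∀ c, ψ (φ c) = t • c := by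
  obtain ⟨n, Y, hY, s, r, hrs⟩ := hp
  choose X hX e using hY
  let S := p.asIdeal.primeCompl
  let Rp := Localization.AtPrime p.asIdeal
  let κ := IsLocalRing.ResidueField Rp
  let E : ((i : Fin n) → Y i) ≃ₗ[Rp] ((i : Fin n) → LocalizedModule S (X i)) :=
    LinearEquiv.piCongrRight fun i => (e i).some
  let s' : κ →ₗ[R] ((i : Fin n) → LocalizedModule S (X i)) :=
    (E.toLinearMap ∘ₗ s).restrictScalars R
  let r' : ((i : Fin n) → LocalizedModule S (X i)) →ₗ[R] κ :=
    (r ∘ₗ E.symm.toLinearMap).restrictScalars R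
  have hrs' : ∀ c, r' (s' c) = c := fun c => by
    have : r (s c) = c := LinearMap.congr_fun hrs c
    simp [r', s', this]
  let ι : ((i : Fin n) → X i) →ₗ[R] ((i : Fin n) → LocalizedModule S (X i)) :=
    .pi fun i ↦ LocalizedModule.mkLinearMap S (X i) ∘ₗ .proj i
  have : IsLocalizedModule S ι := inferInstance
  have hXmem := h𝒳.pi_mem n X hX
  have : Module.Finite R ((i : Fin n) → X i) := h𝒳.fg _ hXmem
  have : Module.FinitePresentation R ((i : Fin n) → X i) :=
    Module.finitePresentation_of_finite R _
  have : Module.FinitePresentation R (R ⧸ p.asIdeal) := Module.finitePresentation_of_finite R _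
  let ν : (R ⧸ p.asIdeal) →ₗ[R] κ :=
    (IsScalarTower.toAlgHom R (R ⧸ p.asIdeal) p.asIdeal.ResidueField).toLinearMap
  have hν : Function.Injective ν := p.asIdeal.injective_algebraMap_quotient_residueField
  have hloc : IsLocalizedModule S ν := by
    have hS : Algebra.algebraMapSubmonoid (R ⧸ p.asIdeal) S = nonZeroDivisors (R ⧸ p.asIdeal) := by
      ext c
      obtain ⟨c, rfl⟩ := Ideal.Quotient.mk_surjective c
      rw [mem_nonZeroDivisors_iff_ne_zero, ne_eq, Ideal.Quotient.eq_zero_iff_mem]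
      constructor
      · rintro ⟨d, hd, hdc⟩ hc
        rw [← Ideal.Quotient.eq_zero_iff_mem, ← hdc] at hc
        exact hd (Ideal.Quotient.eq_zero_iff_mem.1 hc)
      · exact fun hc => ⟨c, hc, rfl⟩
    refine isLocalizedModule_iff_isLocalization.mpr ?_
    rw [hS]
    exact (inferInstance : IsFractionRing (R ⧸ p.asIdeal) p.asIdeal.ResidueField)
  obtain ⟨φ, u, hφ⟩ := Module.FinitePresentation.exists_lift_of_isLocalizedModule S ι (s' ∘ₗ ν)
  obtain ⟨ψ, w, hψ⟩ := Module.FinitePresentation.exists_lift_of_isLocalizedModule S ν (r' ∘ₗ ι)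
  refine ⟨_, hXmem, φ, ψ, (w * u : S), (w * u : S).2, fun c => hν ?_⟩
  have h1 : ι (φ c) = (u : R) • s' (ν c) := LinearMap.congr_fun hφ c
  have h2 : ν (ψ (φ c)) = (w : R) • r' (ι (φ c)) := LinearMap.congr_fun hψ (φ c)
  rw [h2, h1, map_smul, hrs', map_smul, Submonoid.coe_mul, mul_smul]

/-- With `φ, ψ, t` as in `exists_smul_factor`, `R ⧸ p` is a summand of
the pullback of `ψ` along `t`; this pullback is the kernel of an epimorphism from `X` to a module
killed by `p` and `t`. -/
lemma quotient_mem {R : Type} [CommRing R] [IsNoetherianRing R]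
    {𝒳 : Set (ModuleCat.{0} R)} (h𝒳 : IsResolving R 𝒳) (p : PrimeSpectrum R)
    (hp : kappaMemAdd R 𝒳 p)
    (ih : ∀ q : PrimeSpectrum R, p < q → ModuleCat.of R (R ⧸ q.asIdeal) ∈ 𝒳) :
    ModuleCat.of R (R ⧸ p.asIdeal) ∈ 𝒳 := by
  obtain ⟨X, hX, φ, ψ, t, ht, hφψ⟩ := exists_smul_factor h𝒳 p hp
  have hquot : ∀ (N : Type) [AddCommGroup N] [Module R N], Module.Finite R N →
      (∀ r ∈ (insert t (p.asIdeal : Set R)), ∀ n : N, r • n = 0) → ModuleCat.of R N ∈ 𝒳 := by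
    intro N _ _ hN hk
    refine mem_of_killed h𝒳 _ (fun q hq => ih q ?_) N hN hk
    refine lt_of_le_of_ne (fun r hr => hq (Or.inr hr)) ?_
    rintro rfl
    exact ht (hq (Or.inl rfl))
  have hpk : ∀ r ∈ p.asIdeal, ∀ c : R ⧸ p.asIdeal, r • c = 0 := by
    intro r hr c
    rw [Algebra.smul_def, Ideal.Quotient.algebraMap_eq, Ideal.Quotient.eq_zero_iff_mem.2 hr,
      zero_mul]
  have htreg : ∀ c : R ⧸ p.asIdeal, t • c = 0 → c = 0 := by
    intro c hc
    rw [Algebra.smul_def, Ideal.Quotient.algebraMap_eq] at hc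
    exact (mul_eq_zero.1 hc).resolve_left fun h0 => ht (Ideal.Quotient.eq_zero_iff_mem.1 h0)
  have hP : ModuleCat.of R (smulPullback ψ t) ∈ 𝒳 := by
    refine smulPullback_mem h𝒳 ψ t hX ?_ (hquot _ inferInstance ?_)
    · have : Subsingleton (LinearMap.ker (t • (LinearMap.id : R ⧸ p.asIdeal →ₗ[R] _))) := by
        refine ⟨fun a b => Subtype.ext ?_⟩
        rw [htreg a (LinearMap.mem_ker.1 a.2), htreg b (LinearMap.mem_ker.1 b.2)]
      exact h𝒳.subsingleton_mem _
    · rintro s hs ⟨n, hn⟩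
      apply Subtype.ext
      change s • n = 0
      obtain ⟨n, rfl⟩ := Submodule.mkQ_surjective _ n
      rw [← map_smul]
      rcases hs with rfl | hs
      · rw [Submodule.mkQ_apply, Submodule.Quotient.mk_eq_zero]
        exact ⟨n, rfl⟩
      · rw [hpk s hs n, map_zero]
  refine h𝒳.summand_mem _ _ ⟨?_, ?_, ?_⟩ hP
  · exact (LinearMap.prod φ LinearMap.id).codRestrict (smulPullback ψ t) fun c => by
      simp [mem_smulPullback, hφψ]
  · exact LinearMap.snd R _ _ ∘ₗ (smulPullback ψ t).subtype
  · rfl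

/-- Let `R` be Cohen-Macaulay local, `𝒳` a resolving subcategory and `M`
finitely generated with `V(M) ⊆ V(𝒳)`. If `κ(p) ∈ add_{R_p} 𝒳_p` for each `p ∈ V(M)`,
then `M ∈ 𝒳`. -/
theorem mem_resolving_of_kappa_mem
    (R : Type) [CommRing R] [IsNoetherianRing R] [IsLocalRing R]
    (hCM : IsCMLocalRing R)
    (𝒳 : Set (ModuleCat.{0} R)) (h𝒳 : IsResolving R 𝒳)
    (M : ModuleCat.{0} R) (hMfg : Module.Finite R M)
    (hV : nonfreeLocus R M ⊆ catNonfreeLocus R 𝒳)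
    (hκ : ∀ p ∈ nonfreeLocus R M, kappaMemAdd R 𝒳 p) :
    M ∈ 𝒳 := by
  let T : Set R := {t | StablyZero R M t}
  have hT : ∀ p : PrimeSpectrum R, T ⊆ p.asIdeal → p ∈ nonfreeLocus R M := by
    intro p hp
    by_contra hfree
    obtain ⟨t, ht, hst⟩ := exists_stablyZero M p hfree
    exact ht (hp hst)
  have : WellFoundedGT (PrimeSpectrum R) := ⟨InvImage.wf PrimeSpectrum.asIdeal wellFounded_gt⟩
  have hprime : ∀ p : PrimeSpectrum R, T ⊆ p.asIdeal →
      ModuleCat.of R (R ⧸ p.asIdeal) ∈ 𝒳 := by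
    intro p
    induction p using WellFoundedGT.induction with
    | ind p ih =>
      intro hp
      exact quotient_mem h𝒳 p (hκ p (hT p hp)) fun q hq => ih q hq (hp.trans hq.le)
  obtain ⟨s, hsT, hs⟩ := (Submodule.fg_span_iff_fg_span_finset_subset T).1
    (IsNoetherian.noetherian (Submodule.span R T))
  refine mem_of_stablyZero M hMfg s.toList (fun _ hr => hsT (Finset.mem_toList.1 hr)) 𝒳 h𝒳 ?_
  intro N _ _ hN hk
  refine mem_of_killed h𝒳 (s : Set R) (fun q hq => hprime q ?_) N hN
    fun r hr => hk r (Finset.mem_toList.2 hr)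
  have h1 : Submodule.span R T ≤ q.asIdeal := hs ▸ Submodule.span_le.2 hq
  exact Submodule.subset_span.trans h1

end
end

section
/- Let R be a Cohen–Macaulay local ring and X a resolving subcategory of mod R. The following conditions are equivalent: (1) X is closed under tensor products and transposes; (2) for every X ∈ X and every M ∈ X, the transpose tr_X M belongs to X; (3) R/p belongs to X for every p ∈ V(X); (4) κ(p) belongs to add_{R_p}(X_p) for every p ∈ V(X). -/
/-!
The elements of `R` that act on a module `M` through a finite free module form an ideal
`nullIdeal R M`, whose zero locus is the nonfree locus of `M`. A basic device is
`IsResolving.of_lift`: if multiplication by `z` on `M` lifts along `g : Y → M`, then the pullback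
of `g` along `z` has `M` as a direct summand, so that `M` lies in the resolving subcategory `𝒳` as
soon as the kernel of `Y → M / zM` and the `z`-torsion of `M` do.

Closure under tensor products and transposes is equivalent to closure under all `tr_X`, because
`tr_X M ≅ X ⊗ tr M` and, after splitting off a free summand of `M`, `X ⊗ M ≅ tr_X (tr M)`
(`transpose_of_tensor`, `tensor_of_transpose`).

Suppose `𝒳` is closed under all `tr_X` and let `p` be a prime in the nonfree locus of `𝒳`. Pushing
out `0 → Ω → F → M → 0` along elements of `p` yields an object `N` of `𝒳` with null ideal exactly
`p` (`IsResolving.exists_nullIdeal_eq`). The module `Ext¹(N, ΩN)` is built from transposes by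
taking kernels of surjections, so it belongs to `𝒳`, and its annihilator is the null ideal `p` of
`N`; hence its localization at `p` is a nonzero vector space over `κ(p)`, and
`κ(p) ∈ add 𝒳_p` (`kappaMemAdd_of_transpose`).

If `κ(p) ∈ add 𝒳_p` for all `p` in the nonfree locus, then clearing denominators shows that some
`s ∉ p` acts on `R ⧸ p` through an object of `𝒳`. Noetherian induction on `p`, with
`IsResolving.of_lift`, gives `R ⧸ p ∈ 𝒳` (`quotient_mem_of_kappaMemAdd`).

Finally let `R ⧸ p ∈ 𝒳` for all `p` in the nonfree locus `Φ` of `𝒳`. Then `𝒳` contains every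
finitely generated module whose nonfree locus lies in `Φ` (`mem_of_nullIdeal`), in particular
tensor products and transposes of objects of `𝒳`. The proof is by induction on the dimension of
the Cohen–Macaulay ring `R`. After dividing `M` by a submodule supported on `Φ`, the null ideal
contains a regular element `z`, by prime avoidance and because associated primes of `R` are
minimal. The induction hypothesis over `R ⧸ (z)`, for the resolving subcategory of modules whose
first `R`-syzygy is in `𝒳`, applies to `M / zM`, and `IsResolving.of_lift` returns to `M`.
-/

open TensorProduct

noncomputable section

/-! ### Membership in a resolving subcategory, for unbundled modules -/

/-- Membership of an unbundled module in a subcategory of `mod R`. -/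
abbrev Mem {R : Type} [CommRing R] (𝒳 : Set (ModuleCat.{0} R)) (M : Type) [AddCommGroup M]
    [Module R M] : Prop :=
  ModuleCat.of R M ∈ 𝒳

namespace IsResolving

variable {R : Type} [CommRing R] {𝒳 : Set (ModuleCat.{0} R)}
  {L M N : Type} [AddCommGroup L] [Module R L] [AddCommGroup M] [Module R M]
  [AddCommGroup N] [Module R N]

theorem finite (h : IsResolving R 𝒳) (hM : Mem 𝒳 M) : Module.Finite R M := h.fg _ hM

theorem equiv (h : IsResolving R 𝒳) (e : M ≃ₗ[R] N) (hM : Mem 𝒳 M) : Mem 𝒳 N :=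
  h.mem_of_iso (ModuleCat.of R M) (ModuleCat.of R N) ⟨e⟩ hM

theorem summand (h : IsResolving R 𝒳) (i : N →ₗ[R] M) (p : M →ₗ[R] N) (hip : ∀ x, p (i x) = x)
    (hM : Mem 𝒳 M) : Mem 𝒳 N :=
  h.summand_mem (ModuleCat.of R M) (ModuleCat.of R N) ⟨i, p, LinearMap.ext hip⟩ hM

theorem ext (h : IsResolving R 𝒳) (f : L →ₗ[R] M) (g : M →ₗ[R] N) (hf : Function.Injective f)
    (hg : Function.Surjective g) (hfg : Function.Exact f g) (hL : Mem 𝒳 L) (hN : Mem 𝒳 N) :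
    Mem 𝒳 M :=
  h.extension_mem (ModuleCat.of R L) (ModuleCat.of R M) (ModuleCat.of R N) f g hf hg hfg hL hN

theorem ker (h : IsResolving R 𝒳) (f : L →ₗ[R] M) (g : M →ₗ[R] N) (hf : Function.Injective f)
    (hg : Function.Surjective g) (hfg : Function.Exact f g) (hM : Mem 𝒳 M) (hN : Mem 𝒳 N) :
    Mem 𝒳 L :=
  h.ker_epi_mem (ModuleCat.of R L) (ModuleCat.of R M) (ModuleCat.of R N) f g hf hg hfg hM hN

theorem ker' (h : IsResolving R 𝒳) (g : M →ₗ[R] N) (hg : Function.Surjective g)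
    (hM : Mem 𝒳 M) (hN : Mem 𝒳 N) : Mem 𝒳 (LinearMap.ker g) :=
  h.ker (LinearMap.ker g).subtype g (Submodule.subtype_injective _) hg
    (LinearMap.exact_subtype_ker_map g) hM hN

theorem of_subsingleton (h : IsResolving R 𝒳) [Subsingleton M] : Mem 𝒳 M :=
  h.summand (0 : M →ₗ[R] R) 0 (fun _ => Subsingleton.elim _ _) h.ring_mem

theorem prod (h : IsResolving R 𝒳) (hM : Mem 𝒳 M) (hN : Mem 𝒳 N) : Mem 𝒳 (M × N) :=
  h.ext (LinearMap.inl R M N) (LinearMap.snd R M N) LinearMap.inl_injective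
    LinearMap.snd_surjective Function.Exact.inl_snd hM hN

theorem pi (h : IsResolving R 𝒳) (hM : Mem 𝒳 M) (n : ℕ) : Mem 𝒳 (Fin n → M) := by
  induction n with
  | zero => exact h.of_subsingleton
  | succ n ih =>
    exact h.equiv (Fin.consLinearEquiv R (fun _ : Fin (n + 1) => M)) (h.prod hM ih)

theorem free (h : IsResolving R 𝒳) (n : ℕ) : Mem 𝒳 (Fin n → R) := h.pi h.ring_mem n

theorem hom (h : IsResolving R 𝒳) (hM : Mem 𝒳 M) (n : ℕ) : Mem 𝒳 ((Fin n → R) →ₗ[R] M) :=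
  h.equiv ((LinearEquiv.piCongrRight fun _ => (LinearMap.ringLmapEquivSelf R R M).symm) ≪≫ₗ
    LinearMap.lsum R (fun _ : Fin n => R) R) (h.pi hM n)

/-- If `N` is a quotient of some object of `𝒳` with kernel in `𝒳`, then the kernel of every
surjection from an object of `𝒳` onto `N` is in `𝒳` (Schanuel's argument). -/
theorem schanuel (h : IsResolving R 𝒳)
    {Y Y' : Type} [AddCommGroup Y] [Module R Y] [AddCommGroup Y'] [Module R Y']
    (g : Y →ₗ[R] N) (g' : Y' →ₗ[R] N) (hg : Function.Surjective g)
    (hg' : Function.Surjective g') (hY : Mem 𝒳 Y) (hY' : Mem 𝒳 Y')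
    (hk : Mem 𝒳 (LinearMap.ker g)) : Mem 𝒳 (LinearMap.ker g') := by
  let D : (Y × Y') →ₗ[R] N := g.coprod (-g')
  have hD : ∀ z, D z = g z.1 - g' z.2 := fun z => by simp [D, sub_eq_add_neg]
  -- the fibre product of `g` and `g'`
  have hE : Mem 𝒳 (LinearMap.ker D) := by
    refine h.ext (L := LinearMap.ker g) (N := Y')
      (((LinearMap.inl R Y Y') ∘ₗ (LinearMap.ker g).subtype).codRestrict _ ?_)
      (LinearMap.snd R Y Y' ∘ₗ (LinearMap.ker D).subtype) ?_ ?_ ?_ hk hY'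
    · intro x; simp [D]
    · intro x y hxy
      exact Subtype.ext (congrArg (fun t => t.1.1) hxy)
    · intro y'
      obtain ⟨y, hy⟩ := hg (g' y')
      exact ⟨⟨(y, y'), by simp [hD, hy]⟩, rfl⟩
    · rintro ⟨⟨y, y'⟩, hz⟩
      simp only [LinearMap.mem_ker, hD] at hz
      constructor
      · rintro (rfl : y' = 0)
        exact ⟨⟨y, by simpa using hz⟩, rfl⟩
      · rintro ⟨x, hx⟩
        have := congrArg (fun t => t.1.2) hx
        exact this.symm
  refine h.ker (L := LinearMap.ker g') (N := Y)
      (((LinearMap.inr R Y Y') ∘ₗ (LinearMap.ker g').subtype).codRestrict _ ?_)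
      (LinearMap.fst R Y Y' ∘ₗ (LinearMap.ker D).subtype) ?_ ?_ ?_ hE hY
  · intro x; simp [D]
  · intro x y hxy
    exact Subtype.ext (congrArg (fun t => t.1.2) hxy)
  · intro y
    obtain ⟨y', hy⟩ := hg' (g y)
    exact ⟨⟨(y, y'), by simp [hD, hy]⟩, rfl⟩
  · rintro ⟨⟨y, y'⟩, hz⟩
    simp only [LinearMap.mem_ker, hD] at hz
    constructor
    · rintro (rfl : y = 0)
      refine ⟨⟨y', by simpa using hz⟩, rfl⟩
    · rintro ⟨x, hx⟩
      have := congrArg (fun t => t.1.1) hx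
      exact this.symm

/-- Let `g : Y → M` be a homomorphism such that the kernel of `Y → M / zM` and the `z`-torsion
of `M` lie in `𝒳`. If multiplication by `z` on `M` lifts along `g`, then `M ∈ 𝒳`:
the pullback of `g` along `z : M → M` is in `𝒳` and has `M` as a direct summand. -/
theorem of_lift (h : IsResolving R 𝒳)
    {Y : Type} [AddCommGroup Y] [Module R Y] (g : Y →ₗ[R] M) (z : R)
    (a : M →ₗ[R] Y) (ha : ∀ m, g (a m) = z • m)
    (hker : Mem 𝒳 ((LinearMap.range (LinearMap.lsmul R M z)).comap g))
    (htors : Mem 𝒳 (LinearMap.ker (LinearMap.lsmul R M z))) : Mem 𝒳 M := by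
  let D : (Y × M) →ₗ[R] M := g.coprod (-(LinearMap.lsmul R M z))
  have hD : ∀ w, D w = g w.1 - z • w.2 := fun w => by simp [D, sub_eq_add_neg]
  have hE : Mem 𝒳 (LinearMap.ker D) := by
    refine h.ext
      (((LinearMap.inr R Y M) ∘ₗ (LinearMap.ker (LinearMap.lsmul R M z)).subtype).codRestrict
        (LinearMap.ker D) ?_)
      ((LinearMap.fst R Y M ∘ₗ (LinearMap.ker D).subtype).codRestrict
        ((LinearMap.range (LinearMap.lsmul R M z)).comap g) ?_) ?_ ?_ ?_ htors hker
    · rintro ⟨x, hx⟩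
      have hx' : z • x = 0 := by simpa using hx
      simp [hD, hx']
    · rintro ⟨⟨y, m⟩, hw⟩
      simp only [LinearMap.mem_ker, hD] at hw
      exact ⟨m, (sub_eq_zero.mp hw).symm⟩
    · intro x y hxy
      exact Subtype.ext (congrArg (fun t => t.1.2) hxy)
    · rintro ⟨y, m, hm⟩
      refine ⟨⟨(y, m), ?_⟩, rfl⟩
      rw [LinearMap.lsmul_apply] at hm
      simp [hD, hm]
    · rintro ⟨⟨y, m⟩, hw⟩
      simp only [LinearMap.mem_ker, hD] at hw
      constructor
      · intro hy
        obtain rfl : y = 0 := congrArg Subtype.val hy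
        refine ⟨⟨m, ?_⟩, rfl⟩
        simpa using hw
      · rintro ⟨x, hx⟩
        have := congrArg (fun t => t.1.1) hx
        exact Subtype.ext this.symm
  refine h.summand (M := LinearMap.ker D) ((a.prod LinearMap.id).codRestrict _ ?_)
    (LinearMap.snd R Y M ∘ₗ (LinearMap.ker D).subtype) (fun x => rfl) hE
  intro m
  simp [hD, ha]

/-- A finitely generated module lies in `𝒳` as soon as `R ⧸ p` does for every prime `p`
containing its annihilator. -/
theorem of_support (h : IsResolving R 𝒳)
    [IsNoetherianRing R] (M : Type) [AddCommGroup M] [Module R M]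
    (hfin : Module.Finite R M)
    (hM : ∀ p : PrimeSpectrum R, Module.annihilator R M ≤ p.asIdeal → Mem 𝒳 (R ⧸ p.asIdeal)) :
    Mem 𝒳 M := by
  induction hfin using IsNoetherianRing.induction_on_isQuotientEquivQuotientPrime with
  | subsingleton N => exact h.of_subsingleton
  | quotient N p e =>
    refine h.equiv e.symm (hM p ?_)
    rw [e.annihilator_eq, Ideal.annihilator_quotient]
  | exact N₁ N₂ N₃ f g hf hg hfg h1 h3 =>
    exact h.ext f g hf hg hfg
      (h1 fun p hp => hM p ((f.annihilator_le_of_injective hf).trans hp))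
      (h3 fun p hp => hM p ((g.annihilator_le_of_surjective hg).trans hp))

end IsResolving

/-! ### The ideal of elements acting stably trivially -/

/-- The ideal of all `y : R` such that multiplication by `y` on `M` factors through a finite free
module. The maps `M → M` that factor in this way form the image of `M* ⊗ M → End M`. For finitely
generated `M` over a Noetherian ring, it defines the nonfree locus of `M`. -/
def nullIdeal (R : Type) [CommRing R] (M : Type) [AddCommGroup M] [Module R M] : Ideal R :=
  (LinearMap.range (dualTensorHom R M M)).comap (LinearMap.toSpanSingleton R (M →ₗ[R] M) 1)

section Null

variable {R : Type} [CommRing R] {M N : Type} [AddCommGroup M] [Module R M]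
  [AddCommGroup N] [Module R N]

theorem mem_nullIdeal_iff {y : R} :
    y ∈ nullIdeal R M ↔ ∃ t, dualTensorHom R M M t = y • (1 : Module.End R M) := Iff.rfl

theorem mem_nullIdeal_of_factor {F : Type} [AddCommGroup F] [Module R F] [Module.Free R F]
    [Module.Finite R F] {y : R} (a : M →ₗ[R] F) (b : F →ₗ[R] M) (hab : ∀ m, b (a m) = y • m) :
    y ∈ nullIdeal R M := by
  let B := Module.Free.chooseBasis R F
  refine ⟨∑ i, (B.coord i ∘ₗ a) ⊗ₜ[R] b (B i), ?_⟩
  ext m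
  simp only [map_sum, LinearMap.sum_apply, dualTensorHom_apply, LinearMap.comp_apply,
    Module.Basis.coord_apply, LinearMap.toSpanSingleton_apply, LinearMap.smul_apply,
    Module.End.one_apply]
  conv_rhs => rw [← hab, ← B.sum_repr (a m)]
  simp only [map_sum, map_smul]

/-- Multiplication by an element of `nullIdeal R M` lifts along every surjection onto `M`. -/
theorem exists_lift_of_mem_nullIdeal {Y : Type} [AddCommGroup Y] [Module R Y] {y : R}
    (hy : y ∈ nullIdeal R M) (g : Y →ₗ[R] M) (hg : Function.Surjective g) :
    ∃ a : M →ₗ[R] Y, ∀ m, g (a m) = y • m := by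
  obtain ⟨t, ht⟩ := mem_nullIdeal_iff.mp hy
  have key : ∀ t : (Module.Dual R M) ⊗[R] M,
      ∃ a : M →ₗ[R] Y, ∀ m, g (a m) = dualTensorHom R M M t m := by
    intro t
    induction t with
    | zero => exact ⟨0, by simp⟩
    | tmul f m =>
      obtain ⟨u, hu⟩ := hg m
      exact ⟨f.smulRight u, fun x => by simp [hu]⟩
    | add s t hs ht =>
      obtain ⟨a, ha⟩ := hs
      obtain ⟨b, hb⟩ := ht
      exact ⟨a + b, fun x => by simp [ha, hb]⟩
  obtain ⟨a, ha⟩ := key t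
  exact ⟨a, fun m => by rw [ha, ht]; rfl⟩

theorem exists_factor_of_mem_nullIdeal [Module.Finite R M] {y : R} (hy : y ∈ nullIdeal R M) :
    ∃ (n : ℕ) (a : M →ₗ[R] (Fin n → R)) (b : (Fin n → R) →ₗ[R] M), ∀ m, b (a m) = y • m := by
  obtain ⟨n, b, hb⟩ := Module.Finite.exists_fin' R M
  obtain ⟨a, ha⟩ := exists_lift_of_mem_nullIdeal hy b hb
  exact ⟨n, a, b, ha⟩

/-- If a multiple of the identity of `N` factors through `M`, then `nullIdeal` of `M` passes
to `N`. -/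
theorem mul_mem_nullIdeal [Module.Finite R M] {s t : R} (hs : s ∈ nullIdeal R M)
    (i : N →ₗ[R] M) (p : M →ₗ[R] N) (hip : ∀ x, p (i x) = t • x) : s * t ∈ nullIdeal R N := by
  obtain ⟨n, a, b, hab⟩ := exists_factor_of_mem_nullIdeal hs
  exact mem_nullIdeal_of_factor (a ∘ₗ i) (p ∘ₗ b) fun x => by
    simp [hab, hip, mul_smul]

theorem nullIdeal_tensor [Module.Finite R M] [Module.Finite R N] {s t : R}
    (hs : s ∈ nullIdeal R M) (ht : t ∈ nullIdeal R N) : s * t ∈ nullIdeal R (M ⊗[R] N) := by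
  obtain ⟨n, a, b, hab⟩ := exists_factor_of_mem_nullIdeal hs
  obtain ⟨n', a', b', hab'⟩ := exists_factor_of_mem_nullIdeal ht
  refine mem_nullIdeal_of_factor (TensorProduct.map a a') (TensorProduct.map b b') fun m => ?_
  induction m with
  | zero => simp
  | tmul x y => 
    simp only [TensorProduct.map_tmul, hab, hab', TensorProduct.tmul_smul,
      ← TensorProduct.smul_tmul', mul_smul]
    rw [smul_comm]
  | add x y hx hy => rw [map_add, map_add, hx, hy, smul_add]

theorem IsResolving.of_nullIdeal_eq_top {𝒳 : Set (ModuleCat.{0} R)} (h : IsResolving R 𝒳)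
    [Module.Finite R M] (hM : nullIdeal R M = ⊤) : Mem 𝒳 M := by
  obtain ⟨n, a, b, hab⟩ :=
    exists_factor_of_mem_nullIdeal (M := M) (y := 1) (hM ▸ Submodule.mem_top)
  exact h.summand a b (by simpa using hab) (h.free n)

/-- The nonfree locus of a finitely generated module is the closed set defined by its
`nullIdeal`. -/
theorem mem_nonfreeLocus_iff [IsNoetherianRing R] [Module.Finite R M] (p : PrimeSpectrum R) :
    p ∈ nonfreeLocus R M ↔ nullIdeal R M ≤ p.asIdeal := by
  rw [nonfreeLocus, Set.mem_ofPred_eq, not_iff_comm, SetLike.not_le_iff_exists]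
  set Rp := Localization.AtPrime p.asIdeal
  set S := p.asIdeal.primeCompl
  constructor
  · rintro ⟨s, hs, hsp⟩
    obtain ⟨n, a, b, hab⟩ := exists_factor_of_mem_nullIdeal hs
    have hu : IsUnit (algebraMap R Rp s) := IsLocalization.map_units Rp (⟨s, hsp⟩ : S)
    obtain ⟨u, hu⟩ := hu
    have : Module.Finite Rp (LocalizedModule S M) := inferInstance
    let a' := LocalizedModule.map S a
    let b' := LocalizedModule.map S b
    have hab' : ∀ m, b' (a' m) = algebraMap R Rp s • m := by
      intro m
      induction m using LocalizedModule.induction_on with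
      | h m t =>
        simp only [a', b', LocalizedModule.map_mk, hab, algebraMap_smul]
        rw [LocalizedModule.smul'_mk]
    have : Module.Projective Rp (LocalizedModule S M) := by
      refine Module.Projective.of_split (M := LocalizedModule S (Fin n → R)) a'
        ((↑u⁻¹ : Rp) • b') ?_
      ext m
      simp only [LinearMap.comp_apply, LinearMap.smul_apply, hab', LinearMap.id_apply, ← hu]
      rw [smul_smul, Units.inv_mul, one_smul]
    exact Module.free_of_flat_of_isLocalRing
  · intro hfree
    obtain ⟨n, π, hπ⟩ := Module.Finite.exists_fin' R M
    obtain ⟨σ, hσ⟩ := Module.projective_lifting_property (LocalizedModule.map S π) LinearMap.id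
      (LocalizedModule.map_surjective S π hπ)
    have : Module.FinitePresentation R M := Module.finitePresentation_of_finite R M
    obtain ⟨a, t, ha⟩ := Module.FinitePresentation.exists_lift_of_isLocalizedModule S
      (LocalizedModule.mkLinearMap S (Fin n → R))
      (σ.restrictScalars R ∘ₗ LocalizedModule.mkLinearMap S M)
    obtain ⟨c, hc⟩ := Module.Finite.exists_smul_of_comp_eq_of_isLocalizedModule S
      (LocalizedModule.mkLinearMap S M) (π ∘ₗ a) ((t : R) • LinearMap.id) (by
        ext m
        have h3 := congrArg (LocalizedModule.map S π) (LinearMap.congr_fun ha m)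
        simp only [LinearMap.comp_apply, LinearMap.smul_apply, LocalizedModule.mkLinearMap_apply,
          LocalizedModule.map_mk, LinearMap.restrictScalars_apply] at h3
        have h4 : LocalizedModule.map S π (t • σ (LocalizedModule.mk m 1)) =
            t • LocalizedModule.mk m 1 := by
          have h5 := LinearMap.congr_fun hσ (LocalizedModule.mk m 1)
          rw [LinearMap.comp_apply, LinearMap.id_apply] at h5
          rw [Submonoid.smul_def, LinearMap.map_smul_of_tower, h5]
          rfl
        rw [h4] at h3
        simpa [Submonoid.smul_def, LocalizedModule.smul'_mk] using h3)
    refine ⟨c * t, ?_, fun hct => ?_⟩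
    · refine mem_nullIdeal_of_factor ((c : R) • a) π fun m => ?_
      have := LinearMap.congr_fun hc m
      simpa [mul_smul, Submonoid.smul_def] using this
    · exact (p.2.mem_or_mem hct).elim c.2 t.2

end Null

/-! ### Transposes -/

section Transpose

variable {R : Type} [CommRing R]

/-- The transpose of a homomorphism `R^n → R^m` of free modules with their standard bases. -/
def flipMap {n m : ℕ} (d : (Fin n → R) →ₗ[R] (Fin m → R)) : (Fin m → R) →ₗ[R] (Fin n → R) :=
  Matrix.toLin' (LinearMap.toMatrix' d).transpose

theorem flipMap_flipMap {n m : ℕ} (d : (Fin n → R) →ₗ[R] (Fin m → R)) :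
    flipMap (flipMap d) = d := by
  simp [flipMap]

theorem flipMap_dotProduct {n m : ℕ} (d : (Fin n → R) →ₗ[R] (Fin m → R)) (v : Fin m → R)
    (w : Fin n → R) : flipMap d v ⬝ᵥ w = v ⬝ᵥ d w := by
  rw [flipMap, Matrix.toLin'_apply, Matrix.mulVec_transpose, ← Matrix.dotProduct_mulVec,
    LinearMap.toMatrix'_mulVec]

/-- The isomorphism `X ⊗ R^n ≃ Hom(R^n, X)` given by the dot product. -/
def homEquivTensor (X : Type) [AddCommGroup X] [Module R X] (n : ℕ) :
    X ⊗[R] (Fin n → R) ≃ₗ[R] ((Fin n → R) →ₗ[R] X) :=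
  TensorProduct.piScalarRight R R X (Fin n) ≪≫ₗ
    (LinearEquiv.piCongrRight fun _ => (LinearMap.ringLmapEquivSelf R R X).symm) ≪≫ₗ
    LinearMap.lsum R (fun _ : Fin n => R) R

theorem homEquivTensor_tmul (X : Type) [AddCommGroup X] [Module R X] (n : ℕ) (x : X)
    (v w : Fin n → R) : homEquivTensor X n (x ⊗ₜ v) w = (v ⬝ᵥ w) • x := by
  simp only [homEquivTensor, LinearEquiv.trans_apply, TensorProduct.piScalarRight_apply,
    TensorProduct.piScalarRightHom_tmul, LinearMap.lsum_apply, LinearEquiv.piCongrRight_apply,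
    LinearMap.sum_apply, LinearMap.comp_apply, LinearMap.proj_apply,
    LinearMap.ringLmapEquivSelf_symm_apply, LinearMap.smulRight_apply, Module.End.one_apply,
    dotProduct, Finset.sum_smul]
  exact Finset.sum_congr rfl fun i _ => by rw [smul_smul, mul_comm]

/-- The cokernel of `Hom(d, X)` is `X ⊗ coker dᵀ`. -/
theorem nonempty_coker_equiv {n m : ℕ} (d : (Fin n → R) →ₗ[R] (Fin m → R)) (X : Type)
    [AddCommGroup X] [Module R X] {C : Type} [AddCommGroup C] [Module R C]
    (q : (Fin n → R) →ₗ[R] C) (hq : Function.Surjective q)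
    (hdq : Function.Exact (flipMap d) q) :
    Nonempty ((((Fin n → R) →ₗ[R] X) ⧸ LinearMap.range (LinearMap.lcomp R X d)) ≃ₗ[R]
      X ⊗[R] C) := by
  have hcomm : ∀ t, homEquivTensor X n ((flipMap d).lTensor X t) =
      LinearMap.lcomp R X d (homEquivTensor X m t) := by
    intro t
    induction t with
    | zero => simp
    | tmul x v =>
      refine LinearMap.ext fun w => ?_
      rw [LinearMap.lTensor_tmul, homEquivTensor_tmul, LinearMap.lcomp_apply,
        homEquivTensor_tmul, flipMap_dotProduct]
    | add s t hs ht => simp only [map_add, hs, ht]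
  have hex := lTensor_exact X hdq hq
  refine ⟨Submodule.quotEquivOfEq _ _ ?_ ≪≫ₗ LinearMap.quotKerEquivOfSurjective
    (q.lTensor X ∘ₗ (homEquivTensor X n).symm.toLinearMap) ?_⟩
  · ext f
    obtain ⟨t, rfl⟩ := (homEquivTensor X n).surjective f
    rw [LinearMap.mem_ker, LinearMap.comp_apply, LinearEquiv.coe_coe,
      LinearEquiv.symm_apply_apply, hex t]
    constructor
    · rintro ⟨g, hg⟩
      obtain ⟨u, rfl⟩ := (homEquivTensor X m).surjective g
      rw [← hcomm] at hg
      exact ⟨u, (homEquivTensor X n).injective hg⟩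
    · rintro ⟨u, rfl⟩
      exact ⟨_, (hcomm u).symm⟩
  · exact (LinearMap.lTensor_surjective X hq).comp (homEquivTensor X n).symm.surjective

/-- Elements acting stably trivially on `coker d` act stably trivially on `coker dᵀ`. -/
theorem nullIdeal_le_flip {n m : ℕ} (d : (Fin n → R) →ₗ[R] (Fin m → R)) {M T : Type}
    [AddCommGroup M] [Module R M] [AddCommGroup T] [Module R T]
    (π : (Fin m → R) →ₗ[R] M) (hπ : Function.Surjective π) (hdπ : Function.Exact d π)
    (q : (Fin n → R) →ₗ[R] T) (hq : Function.Surjective q)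
    (hdq : Function.Exact (flipMap d) q) : nullIdeal R M ≤ nullIdeal R T := by
  intro s hs
  obtain ⟨a, ha⟩ := exists_lift_of_mem_nullIdeal hs π hπ
  -- `s - a π` maps `R^m` into `ker π = range d`, hence lifts to `τ : R^m → R^n`
  let σ : (Fin m → R) →ₗ[R] (Fin m → R) := s • LinearMap.id - a ∘ₗ π
  have hσ : ∀ v, σ v ∈ LinearMap.range d := by
    intro v
    refine (hdπ _).mp ?_
    simp [σ, ha]
  obtain ⟨τ, hτ⟩ := Module.projective_lifting_property d.rangeRestrict
    (σ.codRestrict _ hσ) d.surjective_rangeRestrict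
  have hτ' : ∀ v, d (τ v) = s • v - a (π v) := fun v =>
    congrArg Subtype.val (LinearMap.congr_fun hτ v)
  have hdτd : ∀ w, d (τ (d w)) = s • d w := by
    intro w
    rw [hτ', (hdπ _).mpr ⟨w, rfl⟩, map_zero, sub_zero]
  have hflip : ∀ v, flipMap d (flipMap τ (flipMap d v)) = s • flipMap d v := by
    intro v
    refine dotProduct_eq _ _ fun w => ?_
    rw [flipMap_dotProduct, flipMap_dotProduct, flipMap_dotProduct, hdτd, smul_dotProduct,
      flipMap_dotProduct, dotProduct_smul]
  let ρ : (Fin n → R) →ₗ[R] (Fin n → R) := s • LinearMap.id - flipMap d ∘ₗ flipMap τ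
  have hρ : LinearMap.ker q ≤ LinearMap.ker ρ := by
    intro w hw
    obtain ⟨v, rfl⟩ := (hdq w).mp hw
    simp [ρ, hflip]
  let e := LinearMap.quotKerEquivOfSurjective q hq
  refine mem_nullIdeal_of_factor ((LinearMap.ker q).liftQ ρ hρ ∘ₗ e.symm.toLinearMap) q
    fun t => ?_
  obtain ⟨w, rfl⟩ := hq t
  have he : e.symm (q w) = (LinearMap.ker q).mkQ w := by
    rw [LinearEquiv.symm_apply_eq]; rfl
  have h0 : ∀ u, q (flipMap d u) = 0 := fun u => (hdq _).mpr ⟨u, rfl⟩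
  simp [he, ρ, h0]

theorem exact_mkQ_range {n m : ℕ} (d : (Fin n → R) →ₗ[R] (Fin m → R)) :
    Function.Exact d (LinearMap.range d).mkQ :=
  LinearMap.exact_map_mkQ_range d

/-- A generator occurring with a unit coefficient in a relation can be dropped. -/
theorem exists_smaller_cover {M : Type} [AddCommGroup M] [Module R M] {k : ℕ}
    (π : (Fin (k + 1) → R) →ₗ[R] M) (hπ : Function.Surjective π) (v : Fin (k + 1) → R)
    (hv : π v = 0) (i : Fin (k + 1)) (hi : IsUnit (v i)) :
    ∃ π' : (Fin k → R) →ₗ[R] M, Function.Surjective π' := by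
  have hsum : ∀ u, π u = u i • π (Pi.single i 1) +
      ∑ j, u (i.succAbove j) • π (Pi.single (i.succAbove j) 1) := by
    intro u
    rw [← Fin.sum_univ_succAbove (fun j => u j • π (Pi.single j 1)) i]
    conv_lhs => rw [← Finset.univ_sum_single u, map_sum]
    refine Finset.sum_congr rfl fun j _ => ?_
    rw [← map_smul, ← Pi.single_smul', smul_eq_mul, mul_one]
  refine ⟨Fintype.linearCombination R fun j => π (Pi.single (i.succAbove j) 1), fun x => ?_⟩
  obtain ⟨u, rfl⟩ := hπ x
  obtain ⟨c, hc⟩ := hi.exists_left_inv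
  -- subtract from `u` the multiple of the relation `v` that kills the `i`-th coordinate
  refine ⟨fun j => (u - (u i * c) • v) (i.succAbove j), ?_⟩
  have h1 : π u = π (u - (u i * c) • v) := by simp [hv]
  rw [h1, hsum, Fintype.linearCombination_apply]
  simp [mul_assoc, hc]

variable [IsLocalRing R]

open IsLocalRing

theorem mem_smul_top_iff {n : ℕ} (v : Fin n → R) :
    v ∈ maximalIdeal R • (⊤ : Submodule R (Fin n → R)) ↔ ∀ i, v i ∈ maximalIdeal R := by
  constructor
  · intro hv i
    induction hv using Submodule.smul_induction_on' with
    | smul r hr w _ => exact Ideal.mul_mem_right _ _ hr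
    | add x _ y _ hx hy => exact Ideal.add_mem _ hx hy
  · intro hv
    rw [← Finset.univ_sum_single v]
    refine Submodule.sum_mem _ fun i _ => ?_
    have : Pi.single i (v i) = v i • (Pi.single i 1 : Fin n → R) := by
      rw [← Pi.single_smul', smul_eq_mul, mul_one]
    rw [this]
    exact Submodule.smul_mem_smul (hv i) Submodule.mem_top

/-- Existence of minimal free covers. -/
theorem exists_minimal_cover (M : Type) [AddCommGroup M] [Module R M] [Module.Finite R M] :
    ∃ (n : ℕ) (π : (Fin n → R) →ₗ[R] M), Function.Surjective π ∧
      LinearMap.ker π ≤ maximalIdeal R • (⊤ : Submodule R (Fin n → R)) := by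
  classical
  have hex : ∃ n : ℕ, ∃ π : (Fin n → R) →ₗ[R] M, Function.Surjective π :=
    Module.Finite.exists_fin' R M
  obtain ⟨π, hπ⟩ := Nat.find_spec hex
  refine ⟨Nat.find hex, π, hπ, fun v hv => (mem_smul_top_iff v).mpr fun i => ?_⟩
  by_contra hi
  -- otherwise the `i`-th generator is redundant, against the minimality of the number
  have hu : IsUnit (v i) := by
    by_contra h; exact hi ((mem_maximalIdeal _).mpr h)
  have hpos : 0 < Nat.find hex := i.pos
  generalize hN : Nat.find hex = N at π v i hpos
  obtain ⟨k, rfl⟩ : ∃ k, N = k + 1 := ⟨N - 1, by omega⟩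
  have := Nat.find_min' hex (exists_smaller_cover π hπ v hv i hu)
  omega

end Transpose

/-! ### Tensor products against transposes -/

section Equivalence

open IsLocalRing

variable {R : Type} [CommRing R] [IsLocalRing R] {𝒳 : Set (ModuleCat.{0} R)}

/-- Right exactness of the tensor product gives `tr_X M ≅ X ⊗ tr M`. -/
theorem transpose_of_tensor (h : IsResolving R 𝒳) (hT : ClosedUnderTensor R 𝒳)
    (htr : ClosedUnderTranspose R 𝒳) :
    ∀ X ∈ 𝒳, ∀ M ∈ 𝒳, ∀ T : ModuleCat.{0} R, IsTransposeOf R X M T → T ∈ 𝒳 := by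
  rintro X hX M hM T ⟨n, m, d, π, hπ, hdπ, hm, hm', ⟨e⟩⟩
  let q := (LinearMap.range (flipMap d)).mkQ
  have hq : Function.Surjective q := Submodule.mkQ_surjective _
  have hC : Mem 𝒳 ((Fin n → R) ⧸ LinearMap.range (flipMap d)) := by
    obtain ⟨e'⟩ := nonempty_coker_equiv d R q hq (exact_mkQ_range _)
    exact h.equiv (e' ≪≫ₗ TensorProduct.lid R _)
      (htr M hM (ModuleCat.of R _) ⟨n, m, d, π, hπ, hdπ, hm, hm', ⟨.refl _ _⟩⟩)
  obtain ⟨e'⟩ := nonempty_coker_equiv d X q hq (exact_mkQ_range _)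
  exact h.equiv (e ≪≫ₗ e').symm (hT X hX _ hC)

/-- Every finitely generated module is the direct sum of a free module and a module without
surjections onto `R`; the kernel of a surjection onto a free module of largest possible rank is
such a complement. -/
theorem exists_max_free_quotient (M : Type) [AddCommGroup M] [Module R M] [Module.Finite R M] :
    ∃ (a : ℕ) (f : M →ₗ[R] (Fin a → R)), Function.Surjective f ∧
      ∀ g : LinearMap.ker f →ₗ[R] R, ¬ Function.Surjective g := by
  classical
  obtain ⟨n, π, hπ⟩ := Module.Finite.exists_fin' R M
  let P : ℕ → Prop := fun a => ∃ f : M →ₗ[R] (Fin a → R), Function.Surjective f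
  have hP0 : P 0 := ⟨0, Function.surjective_to_subsingleton _⟩
  have hbound : ∀ a, P a → a ≤ n := fun a ⟨f, hf⟩ =>
    le_of_fin_surjective R (f ∘ₗ π) (hf.comp hπ)
  obtain ⟨f, hf⟩ : P (Nat.findGreatest P n) := Nat.findGreatest_spec (Nat.zero_le n) hP0
  refine ⟨_, f, hf, fun g hg => ?_⟩
  obtain ⟨σ, hσ⟩ := Module.projective_lifting_property f LinearMap.id hf
  have hσ' : ∀ v, f (σ v) = v := fun v => LinearMap.congr_fun hσ v
  let r : M →ₗ[R] LinearMap.ker f :=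
    (LinearMap.id - σ ∘ₗ f).codRestrict _ fun m => by simp [hσ']
  have hr : ∀ m : LinearMap.ker f, r m = m := fun m => by
    apply Subtype.ext
    have := m.2
    rw [LinearMap.mem_ker] at this
    simp [r, this]
  have hrσ : ∀ v, r (σ v) = 0 := fun v => by
    apply Subtype.ext
    simp [r, hσ']
  have hsucc : P (Nat.findGreatest P n + 1) := by
    refine ⟨(Fin.consLinearEquiv R (fun _ => R)).toLinearMap ∘ₗ ((g ∘ₗ r).prod f),
      (Fin.consLinearEquiv R (fun _ => R)).surjective.comp ?_⟩
    rintro ⟨c, v⟩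
    obtain ⟨m, hm⟩ := hg c
    refine ⟨m + σ v, ?_⟩
    have := m.2
    rw [LinearMap.mem_ker] at this
    simp [hr, hrσ, hσ', hm, this]
  have := Nat.le_findGreatest (hbound _ hsucc) hsucc
  omega

/-- Up to a free summand of `M`, the module `X ⊗ M` is `tr_X (tr M)`: when `M` has no free summand,
the dual of its minimal presentation is the minimal presentation of `tr M`. -/
theorem tensor_of_transpose [IsNoetherianRing R] (h : IsResolving R 𝒳)
    (htr : ∀ X ∈ 𝒳, ∀ M ∈ 𝒳, ∀ T : ModuleCat.{0} R, IsTransposeOf R X M T → T ∈ 𝒳) :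
    ClosedUnderTensor R 𝒳 ∧ ClosedUnderTranspose R 𝒳 := by
  refine ⟨fun X hX M hM => ?_, fun M hM T hT => htr _ h.ring_mem M hM T hT⟩
  have := h.fg M hM
  obtain ⟨a, f, hf, hmax⟩ := exists_max_free_quotient (R := R) M
  let K := LinearMap.ker f
  have hK : Mem 𝒳 K := h.ker' f hf hM (h.free a)
  -- it suffices to treat the summand `K` of `M`
  suffices hXK : Mem 𝒳 (X ⊗[R] K) by
    obtain ⟨σ, hσ⟩ := Module.projective_lifting_property f LinearMap.id hf
    have hσ' : ∀ v, f (σ v) = v := fun v => LinearMap.congr_fun hσ v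
    let r : M →ₗ[R] K := (LinearMap.id - σ ∘ₗ f).codRestrict _ fun m =>
      LinearMap.mem_ker.mpr (by simp [hσ'])
    have hr : r ∘ₗ K.subtype = LinearMap.id := by
      ext m
      have := m.2
      rw [LinearMap.mem_ker] at this
      simp [r, this]
    refine h.ext (K.subtype.lTensor X) (f.lTensor X) ?_ (LinearMap.lTensor_surjective X hf)
      (lTensor_exact X (LinearMap.exact_subtype_ker_map f) hf) hXK
      (h.equiv (TensorProduct.piScalarRight R R X (Fin a)).symm (h.pi hX a))
    refine Function.LeftInverse.injective (g := r.lTensor X) fun t => ?_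
    rw [← LinearMap.comp_apply, ← LinearMap.lTensor_comp, hr, LinearMap.lTensor_id,
      LinearMap.id_apply]
  have := h.finite hK
  obtain ⟨m, π, hπ, hmin⟩ := exists_minimal_cover (R := R) K
  obtain ⟨n, π', hπ', hmin'⟩ := exists_minimal_cover (R := R) (LinearMap.ker π)
  let d := (LinearMap.ker π).subtype ∘ₗ π'
  have hd : ∀ v, d v ∈ LinearMap.ker π := fun v => (π' v).2
  have hdπ : Function.Exact d π := by
    intro v
    constructor
    · intro hv
      obtain ⟨w, hw⟩ := hπ' ⟨v, hv⟩
      exact ⟨w, by simp [d, hw]⟩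
    · rintro ⟨w, rfl⟩
      exact hd w
  have hkd : LinearMap.ker d = LinearMap.ker π' :=
    LinearMap.ker_comp_of_ker_eq_bot _ (Submodule.ker_subtype _)
  let q := (LinearMap.range (flipMap d)).mkQ
  have hq : Function.Surjective q := Submodule.mkQ_surjective _
  have hC : Mem 𝒳 ((Fin n → R) ⧸ LinearMap.range (flipMap d)) := by
    obtain ⟨e'⟩ := nonempty_coker_equiv d R q hq (exact_mkQ_range _)
    exact h.equiv (e' ≪≫ₗ TensorProduct.lid R _)
      (htr _ h.ring_mem (ModuleCat.of R K) hK (ModuleCat.of R _)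
        ⟨n, m, d, π, hπ, hdπ, hmin, hkd ▸ hmin', ⟨.refl _ _⟩⟩)
  -- the dual presentation is minimal, because `K` has no surjection onto `R`
  refine htr X hX (ModuleCat.of R _) hC (ModuleCat.of R _)
    ⟨m, n, flipMap d, q, hq, exact_mkQ_range _, ?_, ?_, ?_⟩
  · rw [Submodule.ker_mkQ]
    rintro _ ⟨v, rfl⟩
    refine (mem_smul_top_iff _).mpr fun i => ?_
    have h1 : flipMap d v i = v ⬝ᵥ d (Pi.single i 1) := by
      rw [← flipMap_dotProduct, dotProduct_single, mul_one]
    rw [h1]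
    exact Ideal.sum_mem _ fun j _ =>
      Ideal.mul_mem_left _ _ ((mem_smul_top_iff _).mp (hmin (hd _)) j)
  · intro v hv
    refine (mem_smul_top_iff _).mpr fun i => ?_
    by_contra hi
    have hu : IsUnit (v i) := by
      by_contra h; exact hi ((mem_maximalIdeal _).mpr h)
    let φ : (Fin m → R) →ₗ[R] R :=
      LinearMap.lsum R (fun _ => R) R fun i => LinearMap.lsmul R R (v i)
    have hφ : ∀ w, φ w = v ⬝ᵥ w := fun w => by simp [φ, dotProduct]
    have hφk : LinearMap.ker π ≤ LinearMap.ker φ := by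
      intro w hw
      obtain ⟨u, rfl⟩ := (hdπ w).mp hw
      rw [LinearMap.mem_ker, hφ, ← flipMap_dotProduct, LinearMap.mem_ker.mp hv, zero_dotProduct]
    let e := LinearMap.quotKerEquivOfSurjective π hπ
    refine hmax ((LinearMap.ker π).liftQ φ hφk ∘ₗ e.symm.toLinearMap) fun c => ?_
    obtain ⟨b, hb⟩ := hu.exists_right_inv
    refine ⟨e ((LinearMap.ker π).mkQ (Pi.single i (b * c))), ?_⟩
    rw [LinearMap.comp_apply, LinearEquiv.coe_coe, LinearEquiv.symm_apply_apply,
      Submodule.mkQ_apply, Submodule.liftQ_apply, hφ, dotProduct_single, ← mul_assoc, hb, one_mul]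
  · obtain ⟨e'⟩ := nonempty_coker_equiv (flipMap d) X π hπ (by rwa [flipMap_flipMap])
    exact ⟨e'.symm⟩

end Equivalence

/-! ### Primes of the nonfree locus as null ideals -/

section Pushout

variable {R : Type} [CommRing R]

/-- The pushout of multiplication by `x` on `Ω` along the inclusion `Ω ⊆ F`. -/
theorem exists_pushout {F : Type} [AddCommGroup F] [Module R F] (Ω : Submodule R F) (x : R) :
    ∃ (N : ModuleCat.{0} R) (i : Ω →ₗ[R] N) (j : F →ₗ[R] N),
      (∀ a : Ω, j a = x • i a) ∧ (∀ n, ∃ a f, i a + j f = n) ∧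
      ∀ (Z : Type) [AddCommGroup Z] [Module R Z] (u : Ω →ₗ[R] Z) (v : F →ₗ[R] Z),
        (∀ a : Ω, v a = x • u a) → ∃ w : N →ₗ[R] Z, (∀ a, w (i a) = u a) ∧ ∀ f, w (j f) = v f := by
  let φ : Ω →ₗ[R] (Ω × F) := (x • LinearMap.id).prod (-Ω.subtype)
  let mk : (Ω × F) →ₗ[R] ((Ω × F) ⧸ LinearMap.range φ) := (LinearMap.range φ).mkQ
  refine ⟨ModuleCat.of R ((Ω × F) ⧸ LinearMap.range φ), mk ∘ₗ LinearMap.inl R Ω F,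
    mk ∘ₗ LinearMap.inr R Ω F, fun a => ?_, fun n => ?_, fun Z _ _ u v huv => ?_⟩
  · have h0 : mk (φ a) = 0 := (Submodule.Quotient.mk_eq_zero _).mpr ⟨a, rfl⟩
    have h1 : φ a = x • LinearMap.inl R Ω F a - LinearMap.inr R Ω F a := by
      simp [φ]
    rw [h1, map_sub, map_smul, sub_eq_zero] at h0
    exact h0.symm
  · obtain ⟨⟨a, f⟩, rfl⟩ := Submodule.mkQ_surjective _ n
    refine ⟨a, f, ?_⟩
    change mk (a, 0) + mk (0, f) = mk (a, f)
    rw [← map_add]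
    simp
  · refine ⟨(LinearMap.range φ).liftQ (u.coprod v) ?_, fun a => ?_, fun f => ?_⟩
    · rintro _ ⟨a, rfl⟩
      simp [φ, huv]
    · exact ((LinearMap.range φ).liftQ_apply _ _).trans (by simp)
    · exact ((LinearMap.range φ).liftQ_apply _ _).trans (by simp)

/-- By Cayley-Hamilton, an endomorphism congruent to `s` modulo `x` is invertible up to an
element outside any prime containing `x` but not `s`. -/
theorem exists_inverse_up_to {Ω : Type} [AddCommGroup Ω] [Module R Ω] [Module.Finite R Ω]
    {p : Ideal R} [hp : p.IsPrime] {x s : R} (hx : x ∈ p) (hs : s ∉ p) (θ : Ω →ₗ[R] Ω)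
    (hθ : ∀ a, ∃ b, θ a - s • a = x • b) :
    ∃ t ∉ p, ∃ ψ : Ω →ₗ[R] Ω, ∀ a, ψ (θ a) = t • a := by
  let η : Module.End R Ω := θ - algebraMap R _ s
  have hη : LinearMap.range η ≤ Ideal.span {x} • ⊤ := by
    rintro _ ⟨a, rfl⟩
    obtain ⟨b, hb⟩ := hθ a
    have : η a = x • b := by simpa [η, Module.algebraMap_end_apply] using hb
    rw [this]
    exact Submodule.smul_mem_smul (Ideal.mem_span_singleton_self x) trivial
  obtain ⟨P, hPm, hPn, hPc, hP0⟩ :=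
    LinearMap.exists_monic_and_natDegree_eq_and_coeff_mem_pow_and_aeval_eq_zero R η
      (Ideal.span {x}) hη
  let Q : Polynomial R := P.comp (Polynomial.X - Polynomial.C s)
  have hQ0 : Polynomial.aeval (R := R) (A := Module.End R Ω) θ Q = 0 := by
    rw [Polynomial.aeval_comp]
    simpa [η] using hP0
  refine ⟨-Q.coeff 0, ?_, Polynomial.aeval (A := Module.End R Ω) θ Q.divX, fun a => ?_⟩
  · rw [neg_mem_iff, Polynomial.coeff_zero_eq_eval_zero]
    simp only [Q, Polynomial.eval_comp, Polynomial.eval_sub, Polynomial.eval_X,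
      Polynomial.eval_C, zero_sub]
    rw [Polynomial.eval_eq_sum_range, Finset.sum_range_succ, hPm.coeff_natDegree, one_mul]
    intro hmem
    have hsum : ∑ k ∈ Finset.range P.natDegree, P.coeff k * (-s) ^ k ∈ p := by
      refine sum_mem fun k hk => Ideal.mul_mem_right _ _ ?_
      have hspan : Ideal.span {x} ≤ p := (Ideal.span_singleton_le_iff_mem _).mpr hx
      have hk' := Finset.mem_range.mp hk
      refine hspan (Ideal.pow_le_self ?_ (hPc k))
      omega
    rw [Ideal.add_mem_iff_right _ hsum] at hmem
    exact hs (neg_mem_iff.mp (hp.mem_of_pow_mem _ hmem))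
  · have := congrArg (Polynomial.aeval (R := R) (A := Module.End R Ω) θ) Q.divX_mul_X_add
    rw [hQ0, map_add, map_mul, Polynomial.aeval_X, Polynomial.aeval_C] at this
    have := LinearMap.congr_fun this a
    simp only [LinearMap.add_apply, Module.End.mul_apply, Module.algebraMap_end_apply,
      LinearMap.zero_apply] at this
    rw [neg_smul]
    exact eq_neg_of_add_eq_zero_left this

/-- An object of `𝒳` which is not free at `p` can be modified so as to enlarge its null ideal by
a given element of `p`, without becoming free at `p`. The new object is the pushout of
`0 → Ω → F → M → 0` along multiplication by `x` on the syzygy `Ω`. -/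
theorem IsResolving.exists_larger_nullIdeal [IsNoetherianRing R] {𝒳 : Set (ModuleCat.{0} R)}
    (h : IsResolving R 𝒳) (p : PrimeSpectrum R) (M : ModuleCat.{0} R) (hM : M ∈ 𝒳)
    (hMp : nullIdeal R M ≤ p.asIdeal) (x : R) (hx : x ∈ p.asIdeal) :
    ∃ N ∈ 𝒳, nullIdeal R N ≤ p.asIdeal ∧ nullIdeal R M ≤ nullIdeal R N ∧ x ∈ nullIdeal R N := by
  have := h.fg M hM
  obtain ⟨k, π, hπ⟩ := Module.Finite.exists_fin' R M
  obtain ⟨N, i, j, hij, hsurj, huniv⟩ := exists_pushout (LinearMap.ker π) x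
  obtain ⟨ρ, hρi, hρj⟩ := huniv M 0 π (fun a => by simp)
  obtain ⟨α, hαi, hαj⟩ := huniv (Fin k → R) (LinearMap.ker π).subtype (x • LinearMap.id)
    (fun a => by simp)
  have hi : Function.Injective i := fun a b hab => Subtype.ext <| by
    simpa [hαi] using congrArg α hab
  have hρ : Function.Surjective ρ := fun m => by
    obtain ⟨f, rfl⟩ := hπ m
    exact ⟨j f, hρj f⟩
  have hiρ : Function.Exact i ρ := by
    intro n
    constructor
    · intro hn
      obtain ⟨a, f, rfl⟩ := hsurj n
      have hf : f ∈ LinearMap.ker π := by simpa [hρi, hρj] using hn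
      refine ⟨a + x • ⟨f, hf⟩, ?_⟩
      rw [map_add, map_smul, ← hij]
    · rintro ⟨a, rfl⟩
      simp [hρi]
  have hN : N ∈ 𝒳 := h.ext i ρ hi hρ hiρ (h.ker' π hπ (h.free k) hM) hM
  have := h.fg N hN
  refine ⟨N, hN, ?_, ?_, ?_⟩
  · intro s hs
    by_contra hsp
    obtain ⟨l, a, b, hab⟩ := exists_factor_of_mem_nullIdeal hs
    let X := LinearMap.range (LinearMap.lsmul R (LinearMap.ker π) x)
    obtain ⟨τ, hτi, hτj⟩ := huniv (LinearMap.ker π ⧸ X) X.mkQ 0 (fun a => by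
      rw [LinearMap.zero_apply, eq_comm, ← map_smul, Submodule.mkQ_apply,
        Submodule.Quotient.mk_eq_zero]
      exact ⟨a, rfl⟩)
    obtain ⟨μ, hμ⟩ := Module.projective_lifting_property X.mkQ (τ ∘ₗ b) X.mkQ_surjective
    let γ := μ ∘ₗ a
    have hγ : ∀ n, X.mkQ (γ n) = s • τ n := fun n => by
      have := LinearMap.congr_fun hμ (a n)
      simp only [LinearMap.comp_apply] at this
      simp only [γ, LinearMap.comp_apply, this, hab, map_smul]
    obtain ⟨t, htp, ψ, hψ⟩ := exists_inverse_up_to hx hsp (γ ∘ₗ i) (fun c => by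
      have h1 := hγ (i c)
      rw [hτi, ← map_smul, ← sub_eq_zero, ← map_sub, Submodule.mkQ_apply,
        Submodule.Quotient.mk_eq_zero] at h1
      obtain ⟨d, hd⟩ := h1
      exact ⟨d, hd.symm⟩)
    let E : N →ₗ[R] N := t • LinearMap.id - i ∘ₗ ψ ∘ₗ γ
    have hE : LinearMap.ker ρ ≤ LinearMap.ker E := by
      intro n hn
      obtain ⟨c, rfl⟩ := (hiρ n).mp hn
      have h1 := hψ c
      simp only [LinearMap.comp_apply] at h1
      simp [E, h1]
    let e : M →ₗ[R] N :=
      (LinearMap.ker ρ).liftQ E hE ∘ₗ (ρ.quotKerEquivOfSurjective hρ).symm.toLinearMap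
    have he : ∀ n, e (ρ n) = E n := fun n => by
      have : (ρ.quotKerEquivOfSurjective hρ).symm (ρ n) = (LinearMap.ker ρ).mkQ n := by
        rw [LinearEquiv.symm_apply_eq]; rfl
      simp [e, this]
    have hst : s * t ∈ nullIdeal R M := mul_mem_nullIdeal hs e ρ fun m => by
      obtain ⟨n, rfl⟩ := hρ m
      rw [he]
      simp [E, hρi]
    exact (p.2.mem_or_mem (hMp hst)).elim hsp htp
  · intro y hy
    obtain ⟨c, hc⟩ := exists_lift_of_mem_nullIdeal hy π hπ
    let σ : (Fin k → R) →ₗ[R] LinearMap.ker π :=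
      (y • LinearMap.id - c ∘ₗ π).codRestrict _ fun f => LinearMap.mem_ker.mpr (by simp [hc])
    have hσ : ∀ f, j (σ f) = y • j f - j (c (π f)) := fun f => by simp [σ]
    have hσ' : ∀ a : LinearMap.ker π, σ a = y • a := fun a => by
      have := LinearMap.mem_ker.mp a.2
      apply Subtype.ext
      simp [σ, this]
    refine mem_nullIdeal_of_factor ((c ∘ₗ ρ).prod α) (j.coprod (i ∘ₗ σ)) fun n => ?_
    obtain ⟨a, f, rfl⟩ := hsurj n
    have h1 := hσ f
    rw [hij] at h1
    change j (c (ρ (i a + j f))) + i (σ (α (i a + j f))) = _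
    simp only [map_add, hρi, hρj, hαi, hαj, LinearMap.zero_apply, zero_add,
      Submodule.subtype_apply, hσ',
      LinearMap.smul_apply, LinearMap.id_apply, map_smul, h1, smul_add]
    abel
  · refine mem_nullIdeal_of_factor α j fun n => ?_
    obtain ⟨a, f, rfl⟩ := hsurj n
    simp [hαi, hαj, hij]

/-- Every prime of the nonfree locus of `𝒳` is the null ideal of an object of `𝒳`. -/
theorem IsResolving.exists_nullIdeal_eq [IsNoetherianRing R] {𝒳 : Set (ModuleCat.{0} R)}
    (h : IsResolving R 𝒳) (p : PrimeSpectrum R) (hp : p ∈ catNonfreeLocus R 𝒳) :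
    ∃ M ∈ 𝒳, nullIdeal R M = p.asIdeal := by
  simp only [catNonfreeLocus, Set.mem_iUnion] at hp
  obtain ⟨M₀, hM₀, hp₀⟩ := hp
  have := h.fg M₀ hM₀
  rw [mem_nonfreeLocus_iff] at hp₀
  let S : Set (Ideal R) := {I | ∃ M ∈ 𝒳, nullIdeal R M ≤ p.asIdeal ∧ nullIdeal R M = I}
  obtain ⟨I, ⟨M, hM, hMp, rfl⟩, hmax⟩ :=
    set_has_maximal_iff_noetherian.mpr (inferInstance : IsNoetherian R R) S
      ⟨_, M₀, hM₀, hp₀, rfl⟩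
  refine ⟨M, hM, le_antisymm hMp fun x hx => ?_⟩
  obtain ⟨N, hN, hNp, hMN, hxN⟩ := h.exists_larger_nullIdeal p M hM hMp x hx
  by_contra hxM
  exact hmax _ ⟨N, hN, hNp, rfl⟩ (lt_of_le_of_ne hMN fun he => hxM (he ▸ hxN))

end Pushout

/-! ### Residue fields out of transposes -/

section ExtModule

open IsLocalRing

variable {R : Type} [CommRing R]

theorem exact_subtype_comp {M F F' : Type} [AddCommGroup M] [Module R M] [AddCommGroup F]
    [Module R F] [AddCommGroup F'] [Module R F'] (π : F →ₗ[R] M)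
    (π' : F' →ₗ[R] LinearMap.ker π) (hπ' : Function.Surjective π') :
    Function.Exact ((LinearMap.ker π).subtype ∘ₗ π') π := by
  intro v
  constructor
  · intro hv
    obtain ⟨w, hw⟩ := hπ' ⟨v, hv⟩
    exact ⟨w, by simp [hw]⟩
  · rintro ⟨w, rfl⟩
    exact (π' w).2

theorem exists_comp_eq {A B C : Type} [AddCommGroup A] [Module R A] [AddCommGroup B]
    [Module R B] [AddCommGroup C] [Module R C] (π : A →ₗ[R] B) (hπ : Function.Surjective π)
    (φ : A →ₗ[R] C) (hφ : LinearMap.ker π ≤ LinearMap.ker φ) :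
    ∃ φ' : B →ₗ[R] C, ∀ a, φ' (π a) = φ a := by
  refine ⟨(LinearMap.ker π).liftQ φ hφ ∘ₗ (π.quotKerEquivOfSurjective hπ).symm.toLinearMap,
    fun a => ?_⟩
  have : (π.quotKerEquivOfSurjective hπ).symm (π a) = (LinearMap.ker π).mkQ a := by
    rw [LinearEquiv.symm_apply_eq]; rfl
  simp [this]

variable {𝒳 : Set (ModuleCat.{0} R)}

/-- The module `T` constructed here is `Ext¹(N, X)` for the syzygy `X` of `N`: it is the kernel of
the natural surjection from `tr_X N` onto the image of `Hom(F₁, X) → Hom(F₂, X)`, which in turn is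
the kernel of `Hom(F₂, X) → tr_X X`. -/
theorem IsResolving.exists_annihilator_eq_aux (h : IsResolving R 𝒳)
    {N X : Type} [AddCommGroup N] [Module R N] [AddCommGroup X] [Module R X]
    (hX : Mem 𝒳 X) {n₀ n₁ n₂ : ℕ} (π₀ : (Fin n₀ → R) →ₗ[R] N) (ι : X →ₗ[R] (Fin n₀ → R))
    (π₁ : (Fin n₁ → R) →ₗ[R] X) (d₂ : (Fin n₂ → R) →ₗ[R] (Fin n₁ → R))
    (hπ₀ : Function.Surjective π₀) (hι : Function.Injective ι) (hιπ : Function.Exact ι π₀)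
    (hπ₁ : Function.Surjective π₁) (hd : Function.Exact d₂ π₁)
    (hT₁ : Mem 𝒳 (((Fin n₁ → R) →ₗ[R] X) ⧸ LinearMap.range (LinearMap.lcomp R X (ι ∘ₗ π₁))))
    (hT₂ : Mem 𝒳 (((Fin n₂ → R) →ₗ[R] X) ⧸ LinearMap.range (LinearMap.lcomp R X d₂))) :
    ∃ T ∈ 𝒳, Module.annihilator R T = nullIdeal R N := by
  set A₁ := LinearMap.range (LinearMap.lcomp R X (ι ∘ₗ π₁))
  set A₂ := LinearMap.range (LinearMap.lcomp R X d₂)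
  have hA₂ : Mem 𝒳 A₂ := by
    have := h.ker' A₂.mkQ A₂.mkQ_surjective (h.hom hX n₂) hT₂
    exact h.equiv (LinearEquiv.ofEq _ _ A₂.ker_mkQ) this
  have hd' : ∀ v, π₁ (d₂ v) = 0 := fun v => (hd _).mpr ⟨v, rfl⟩
  let g : (((Fin n₁ → R) →ₗ[R] X) ⧸ A₁) →ₗ[R] A₂ :=
    A₁.liftQ (LinearMap.lcomp R X d₂).rangeRestrict <| by
      rintro _ ⟨σ, rfl⟩
      rw [LinearMap.mem_ker]
      apply Subtype.ext
      ext1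
      ext1
      simp [hd']
  have hg : Function.Surjective g := by
    rintro ⟨_, φ, rfl⟩
    exact ⟨A₁.mkQ φ, rfl⟩
  refine ⟨ModuleCat.of R (LinearMap.ker g), h.ker' g hg hT₁ hA₂, ?_⟩
  ext y
  rw [Module.mem_annihilator]
  constructor
  · intro hy
    have hπ : A₁.mkQ π₁ ∈ LinearMap.ker g := by
      rw [LinearMap.mem_ker]
      apply Subtype.ext
      change LinearMap.lcomp R X d₂ π₁ = 0
      refine LinearMap.ext fun v => ?_
      simp [hd']
    have h1 : y • A₁.mkQ π₁ = 0 := congrArg Subtype.val (hy ⟨_, hπ⟩)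
    rw [← map_smul, Submodule.mkQ_apply, Submodule.Quotient.mk_eq_zero] at h1
    obtain ⟨σ, hσ⟩ := h1
    obtain ⟨c, hc⟩ := exists_comp_eq π₀ hπ₀ (y • LinearMap.id - ι ∘ₗ σ) <| by
      intro w hw
      obtain ⟨b, rfl⟩ := (hιπ w).mp hw
      obtain ⟨v, rfl⟩ := hπ₁ b
      have h3 : σ (ι (π₁ v)) = y • π₁ v := LinearMap.congr_fun hσ v
      simp [h3]
    refine mem_nullIdeal_of_factor c π₀ fun m => ?_
    obtain ⟨v, rfl⟩ := hπ₀ m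
    have h2 : π₀ (ι (σ v)) = 0 := (hιπ _).mpr ⟨_, rfl⟩
    simp [hc, h2]
  · rintro hy ⟨t, ht⟩
    obtain ⟨φ, rfl⟩ := A₁.mkQ_surjective t
    have hφ : ∀ v, φ (d₂ v) = 0 := fun v => by
      have := congrArg Subtype.val (LinearMap.mem_ker.mp ht)
      exact LinearMap.congr_fun this v
    obtain ⟨φ', hφ'⟩ := exists_comp_eq π₁ hπ₁ φ <| by
      intro w hw
      obtain ⟨v, rfl⟩ := (hd w).mp hw
      exact hφ v
    obtain ⟨c, hc⟩ := exists_lift_of_mem_nullIdeal hy π₀ hπ₀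
    have hex : ∀ f, ∃ b, ι b = y • f - c (π₀ f) := fun f =>
      (hιπ _).mp (by simp [hc])
    let σ : (Fin n₀ → R) →ₗ[R] X :=
      (LinearEquiv.ofInjective ι hι).symm.toLinearMap ∘ₗ
        (y • LinearMap.id - c ∘ₗ π₀).codRestrict (LinearMap.range ι) hex
    have hσ : ∀ a, σ (ι a) = y • a := fun a => by
      have h0 : π₀ (ι a) = 0 := (hιπ _).mpr ⟨a, rfl⟩
      change (LinearEquiv.ofInjective ι hι).symm _ = _
      rw [LinearEquiv.symm_apply_eq]
      apply Subtype.ext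
      change y • ι a - c (π₀ (ι a)) = ι (y • a)
      simp [h0]
    apply Subtype.ext
    change y • A₁.mkQ φ = 0
    rw [← map_smul, Submodule.mkQ_apply, Submodule.Quotient.mk_eq_zero]
    refine ⟨φ' ∘ₗ σ, LinearMap.ext fun v => ?_⟩
    change φ' (σ (ι (π₁ v))) = y • φ v
    rw [hσ, map_smul, hφ']

/-- The null ideal of `N` is the annihilator of `Ext¹(N, ΩN)`, since the class of
`0 → ΩN → F → N → 0` is killed exactly by the elements acting on `N` through a free module. -/
theorem IsResolving.exists_annihilator_eq [IsLocalRing R] [IsNoetherianRing R]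
    (h : IsResolving R 𝒳)
    (htr : ∀ X ∈ 𝒳, ∀ M ∈ 𝒳, ∀ T : ModuleCat.{0} R, IsTransposeOf R X M T → T ∈ 𝒳)
    (N : ModuleCat.{0} R) (hN : N ∈ 𝒳) :
    ∃ T ∈ 𝒳, Module.annihilator R T = nullIdeal R N := by
  have := h.fg N hN
  obtain ⟨n₀, π₀, hπ₀, hm₀⟩ := exists_minimal_cover (R := R) N
  obtain ⟨n₁, π₁, hπ₁, hm₁⟩ := exists_minimal_cover (R := R) (LinearMap.ker π₀)
  obtain ⟨n₂, π₂, hπ₂, hm₂⟩ := exists_minimal_cover (R := R) (LinearMap.ker π₁)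
  have hΩ : Mem 𝒳 (LinearMap.ker π₀) := h.ker' π₀ hπ₀ (h.free _) hN
  let d₁ : (Fin n₁ → R) →ₗ[R] (Fin n₀ → R) := (LinearMap.ker π₀).subtype ∘ₗ π₁
  let d₂ : (Fin n₂ → R) →ₗ[R] (Fin n₁ → R) := (LinearMap.ker π₁).subtype ∘ₗ π₂
  have hk₁ : LinearMap.ker d₁ = LinearMap.ker π₁ :=
    LinearMap.ker_comp_of_ker_eq_bot _ (Submodule.ker_subtype _)
  have hk₂ : LinearMap.ker d₂ = LinearMap.ker π₂ :=
    LinearMap.ker_comp_of_ker_eq_bot _ (Submodule.ker_subtype _)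
  refine h.exists_annihilator_eq_aux hΩ π₀ (LinearMap.ker π₀).subtype π₁ d₂ hπ₀
    (Submodule.subtype_injective _) (LinearMap.exact_subtype_ker_map π₀) hπ₁
    (exact_subtype_comp π₁ π₂ hπ₂) ?_ ?_
  · exact htr (ModuleCat.of R (LinearMap.ker π₀)) hΩ N hN (ModuleCat.of R _)
      ⟨n₁, n₀, d₁, π₀, hπ₀, exact_subtype_comp π₀ π₁ hπ₁, hm₀, hk₁ ▸ hm₁,
        ⟨LinearEquiv.refl R _⟩⟩
  · exact htr (ModuleCat.of R (LinearMap.ker π₀)) hΩ (ModuleCat.of R (LinearMap.ker π₀)) hΩ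
      (ModuleCat.of R _)
      ⟨n₂, n₁, d₂, π₁, hπ₁, exact_subtype_comp π₁ π₂ hπ₂, hm₁, hk₂ ▸ hm₂,
        ⟨LinearEquiv.refl R _⟩⟩

end ExtModule

section Kappa

open IsLocalRing

/-- The residue field of a local ring is a direct summand of every nonzero module killed by the
maximal ideal. -/
theorem exists_residueField_summand {A W : Type} [CommRing A] [IsLocalRing A] [AddCommGroup W]
    [Module A W] [Nontrivial W] (hW : ∀ a ∈ maximalIdeal A, ∀ w : W, a • w = 0) :
    ∃ (s : ResidueField A →ₗ[A] W) (r : W →ₗ[A] ResidueField A), r ∘ₗ s = LinearMap.id := by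
  have hT : Module.IsTorsionBySet A W (maximalIdeal A : Set A) := fun w a => hW a a.2 w
  let _ : Module (ResidueField A) W := hT.module
  have hsc : ∀ (a : A) (w : W), residue A a • w = a • w := fun a w => rfl
  obtain ⟨v, hv⟩ := exists_ne (0 : W)
  obtain ⟨f, hf⟩ := Module.Projective.exists_dual_eq_one (ResidueField A) hv
  have hr : ∀ (a : A) (c : ResidueField A), a • c = residue A a * c := fun a c => by
    rw [Algebra.smul_def]; rfl
  refine ⟨⟨⟨fun c => c • v, fun _ _ => add_smul _ _ _⟩, fun a c => ?_⟩,
    ⟨⟨f, map_add f⟩, fun a w => ?_⟩, ?_⟩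
  · simp only [hr, mul_smul, hsc, RingHom.id_apply]
  · change f (a • w) = a • f w
    rw [← hsc, map_smul, hr, smul_eq_mul]
  · ext1 c
    change f (c • v) = c
    rw [map_smul, hf, smul_eq_mul, mul_one]

/-- If `p` is the annihilator of `T`, then `T_p` is a nonzero vector space over `κ(p)`. -/
theorem kappaMemAdd_of_annihilator_eq {R : Type} [CommRing R] {𝒳 : Set (ModuleCat.{0} R)}
    (p : PrimeSpectrum R) (T : ModuleCat.{0} R) [Module.Finite R T] (hT : T ∈ 𝒳)
    (hp : Module.annihilator R T = p.asIdeal) : kappaMemAdd R 𝒳 p := by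
  have hnt : Nontrivial (LocalizedModule p.asIdeal.primeCompl T) :=
    Module.mem_support_iff.mp (Module.mem_support_iff_of_finite.mpr hp.le)
  obtain ⟨s, r, hrs⟩ := exists_residueField_summand (A := Localization.AtPrime p.asIdeal)
    (W := LocalizedModule p.asIdeal.primeCompl T) <| by
      intro a ha w
      induction w using LocalizedModule.induction_on with
      | h t u =>
      obtain ⟨b, c, rfl⟩ := IsLocalization.exists_mk'_eq p.asIdeal.primeCompl a
      have hb : b ∈ p.asIdeal :=
        (IsLocalization.AtPrime.mk'_mem_maximal_iff
          (Localization.AtPrime p.asIdeal) p.asIdeal b c).mp ha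
      rw [← hp, Module.mem_annihilator] at hb
      rw [← Localization.mk_eq_mk', LocalizedModule.mk_smul_mk, hb, LocalizedModule.zero_mk]
  refine ⟨1, fun _ => ModuleCat.of _ (LocalizedModule p.asIdeal.primeCompl T),
    fun _ => ⟨T, hT, ⟨LinearEquiv.refl _ _⟩⟩, LinearMap.pi fun _ => s,
    r ∘ₗ LinearMap.proj 0, ?_⟩
  rw [← hrs]
  rfl

theorem kappaMemAdd_of_transpose {R : Type} [CommRing R] [IsLocalRing R] [IsNoetherianRing R]
    {𝒳 : Set (ModuleCat.{0} R)} (h : IsResolving R 𝒳)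
    (htr : ∀ X ∈ 𝒳, ∀ M ∈ 𝒳, ∀ T : ModuleCat.{0} R, IsTransposeOf R X M T → T ∈ 𝒳)
    (p : PrimeSpectrum R) (hp : p ∈ catNonfreeLocus R 𝒳) : kappaMemAdd R 𝒳 p := by
  obtain ⟨N, hN, hNp⟩ := h.exists_nullIdeal_eq p hp
  obtain ⟨T, hT, hTN⟩ := h.exists_annihilator_eq htr N hN
  have := h.fg T hT
  exact kappaMemAdd_of_annihilator_eq p T hT (hTN.trans hNp)

end Kappa

/-! ### From residue fields to the modules `R ⧸ p` -/

section ClearDenominators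

variable {R : Type} [CommRing R]

/-- Finitely many denominators have a common multiple. -/
theorem exists_uniform_smul_mem {X W : Type} [AddCommGroup X] [Module R X] [Module.Finite R X]
    [AddCommGroup W] [Module R W] (S : Submonoid R) (f : X →ₗ[R] W) (D : Submodule R W)
    (hf : ∀ x, ∃ b ∈ S, b • f x ∈ D) : ∃ b ∈ S, ∀ x, b • f x ∈ D := by
  obtain ⟨s, hs⟩ := (inferInstance : Module.Finite R X).fg_top
  choose b hbS hb using hf
  refine ⟨∏ x ∈ s, b x, prod_mem fun x _ => hbS x, fun x => ?_⟩
  have hx : x ∈ Submodule.span R (s : Set X) := hs ▸ Submodule.mem_top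
  induction hx using Submodule.span_induction with
  | mem x hx =>
    obtain ⟨c, hc⟩ := Finset.dvd_prod_of_mem b hx
    rw [hc, mul_comm, mul_smul]
    exact D.smul_mem _ (hb x)
  | zero => simp
  | add x y _ _ hx hy =>
    rw [map_add, smul_add]
    exact D.add_mem hx hy
  | smul r x _ hx =>
    rw [map_smul, smul_comm]
    exact D.smul_mem _ hx

theorem smul_eq_zero_of_notMem (p : Ideal R) [p.IsPrime] {W : Type} [AddCommGroup W] [Module R W]
    [Module (Localization.AtPrime p) W] [IsScalarTower R (Localization.AtPrime p) W] {b : R}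
    (hb : b ∉ p) {w : W} (hw : b • w = 0) : w = 0 := by
  rw [← algebraMap_smul (Localization.AtPrime p)] at hw
  exact (IsLocalization.map_units (Localization.AtPrime p)
    (⟨b, hb⟩ : p.primeCompl)).smul_eq_zero.mp hw

theorem mem_catNonfreeLocus_of_le [IsNoetherianRing R] {𝒳 : Set (ModuleCat.{0} R)}
    (h : IsResolving R 𝒳) {p q : PrimeSpectrum R} (hp : p ∈ catNonfreeLocus R 𝒳)
    (hpq : p.asIdeal ≤ q.asIdeal) : q ∈ catNonfreeLocus R 𝒳 := by
  simp only [catNonfreeLocus, Set.mem_iUnion] at hp ⊢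
  obtain ⟨M, hM, hp⟩ := hp
  have := h.fg M hM
  rw [mem_nonfreeLocus_iff] at hp
  exact ⟨M, hM, (mem_nonfreeLocus_iff q).mpr (hp.trans hpq)⟩

/-- If `κ(p)` is a direct summand of a finite direct sum of localizations of objects of `𝒳`, then
some object `X` of `𝒳` has an element killed by `p` with nonzero image under a map `X → R/p`. -/
theorem exists_of_kappaMemAdd [IsNoetherianRing R] {𝒳 : Set (ModuleCat.{0} R)}
    (h : IsResolving R 𝒳) (p : PrimeSpectrum R) (hp : kappaMemAdd R 𝒳 p) :
    ∃ X ∈ 𝒳, ∃ (w : X) (g : X →ₗ[R] R ⧸ p.asIdeal), (∀ a ∈ p.asIdeal, a • w = 0) ∧ g w ≠ 0 := by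
  obtain ⟨n, Y, hY, s, r, hrs⟩ := hp
  let κ := IsLocalRing.ResidueField (Localization.AtPrime p.asIdeal)
  obtain ⟨i, hi⟩ : ∃ i, r (Pi.single i (s 1 i)) ≠ 0 := by
    by_contra hcon
    push Not at hcon
    have h1 : r (s 1) = 1 := LinearMap.congr_fun hrs 1
    rw [← Finset.univ_sum_single (s 1), map_sum, Finset.sum_eq_zero fun i _ => hcon i] at h1
    exact zero_ne_one h1
  obtain ⟨X, hX, ⟨e⟩⟩ := hY i
  have := h.fg X hX
  let r' : LocalizedModule p.asIdeal.primeCompl X →ₗ[Localization.AtPrime p.asIdeal] κ :=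
    r ∘ₗ LinearMap.single _ _ i ∘ₗ e.symm.toLinearMap
  let w₀ := e (s 1 i)
  have hw₀ : r' w₀ ≠ 0 := by simpa [r', w₀] using hi
  have hkill : ∀ a ∈ IsLocalRing.maximalIdeal (Localization.AtPrime p.asIdeal), a • w₀ = 0 := by
    intro a ha
    have h1 : a • (1 : κ) = 0 := by
      rw [Algebra.smul_def, mul_one]
      exact (IsLocalRing.residue_eq_zero_iff a).mpr ha
    have h2 : a • w₀ = e ((s (a • (1 : κ))) i) := by simp [w₀, -smul_eq_mul]
    rw [h2, h1, map_zero, Pi.zero_apply, map_zero]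
  obtain ⟨w₁, u, hu⟩ : ∃ w₁ u, w₀ = LocalizedModule.mk w₁ u := by
    induction w₀ using LocalizedModule.induction_on with
    | h w u => exact ⟨w, u, rfl⟩
  let f : X →ₗ[R] κ :=
    r'.restrictScalars R ∘ₗ LocalizedModule.mkLinearMap p.asIdeal.primeCompl X
  have hw₁ : LocalizedModule.mkLinearMap p.asIdeal.primeCompl X w₁ = (u : R) • w₀ := by
    rw [hu, LocalizedModule.smul'_mk, LocalizedModule.mkLinearMap_apply]
    exact (LocalizedModule.mk_cancel u w₁).symm
  have hf₁ : f w₁ ≠ 0 := by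
    intro h0
    refine hw₀ (smul_eq_zero_of_notMem p.asIdeal u.2 (w := r' w₀) ?_)
    rw [← h0]
    change _ = r' (LocalizedModule.mkLinearMap p.asIdeal.primeCompl X w₁)
    rw [hw₁]
    exact (map_smul (r'.restrictScalars R) _ _).symm
  -- a multiple of `w₁` is killed by `p`
  obtain ⟨v, hv, hvw⟩ := exists_uniform_smul_mem p.asIdeal.primeCompl
    ((LinearMap.toSpanSingleton R X w₁) ∘ₗ p.asIdeal.subtype) ⊥ (fun a => by
      have h1 : LocalizedModule.mkLinearMap p.asIdeal.primeCompl X ((a : R) • w₁) = 0 := by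
        rw [map_smul, hw₁, smul_comm, ← algebraMap_smul (Localization.AtPrime p.asIdeal) (a : R),
          hkill _ ((IsLocalization.AtPrime.to_map_mem_maximal_iff _ p.asIdeal _).mpr a.2),
          smul_zero]
      obtain ⟨c, hc⟩ := (IsLocalizedModule.eq_zero_iff p.asIdeal.primeCompl _).mp h1
      exact ⟨c, c.2, (Submodule.mem_bot R).mpr hc⟩)
  -- a multiple of `f` takes values in `R/p`
  let j : (R ⧸ p.asIdeal) →ₗ[R] κ :=
    (Ideal.Quotient.liftₐ p.asIdeal (Algebra.ofId R κ) (fun a ha => by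
      change algebraMap R κ a = 0
      rw [IsScalarTower.algebraMap_apply R (Localization.AtPrime p.asIdeal) κ]
      exact (IsLocalRing.residue_eq_zero_iff _).mpr
        ((IsLocalization.AtPrime.to_map_mem_maximal_iff _ p.asIdeal _).mpr ha))).toLinearMap
  have hj' : ∀ a : R, j (Ideal.Quotient.mk _ a) = algebraMap R κ a := fun a => rfl
  have hj : Function.Injective j := by
    rw [← LinearMap.ker_eq_bot, LinearMap.ker_eq_bot']
    intro c hc
    obtain ⟨a, rfl⟩ := Ideal.Quotient.mk_surjective c
    rw [hj', IsScalarTower.algebraMap_apply R (Localization.AtPrime p.asIdeal) κ] at hc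
    exact Ideal.Quotient.eq_zero_iff_mem.mpr
      ((IsLocalization.AtPrime.to_map_mem_maximal_iff _ p.asIdeal _).mp
        ((IsLocalRing.residue_eq_zero_iff _).mp hc))
  obtain ⟨b, hb, hbf⟩ := exists_uniform_smul_mem p.asIdeal.primeCompl f (LinearMap.range j)
    (fun x => by
      obtain ⟨y, hy⟩ := IsLocalRing.residue_surjective (f x)
      obtain ⟨a, c, rfl⟩ := IsLocalization.exists_mk'_eq p.asIdeal.primeCompl y
      refine ⟨c, c.2, Ideal.Quotient.mk _ a, ?_⟩
      rw [hj', ← hy, IsScalarTower.algebraMap_apply R (Localization.AtPrime p.asIdeal) κ,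
        ← IsLocalization.mk'_spec (Localization.AtPrime p.asIdeal) a c, mul_comm,
        ← smul_eq_mul, algebraMap_smul, ← IsLocalRing.ResidueField.algebraMap_eq,
        Algebra.algebraMap_eq_smul_one, Algebra.algebraMap_eq_smul_one, smul_assoc])
  let g : X →ₗ[R] R ⧸ p.asIdeal := (LinearEquiv.ofInjective j hj).symm.toLinearMap ∘ₗ
    (b • f).codRestrict (LinearMap.range j) hbf
  have hg : ∀ x, j (g x) = b • f x := fun x => by
    have := (LinearEquiv.ofInjective j hj).apply_symm_apply
      ((b • f).codRestrict (LinearMap.range j) hbf x)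
    exact congrArg Subtype.val this
  refine ⟨X, hX, v • w₁, g, fun a ha => ?_, fun h0 => ?_⟩
  · have := hvw ⟨a, ha⟩
    rw [smul_comm]
    exact (Submodule.mem_bot R).mp this
  · have h1 := hg (v • w₁)
    rw [h0, map_zero, map_smul] at h1
    exact hf₁ (smul_eq_zero_of_notMem p.asIdeal hv
      (smul_eq_zero_of_notMem p.asIdeal hb h1.symm))

/-- Noetherian induction on `p`. Some `s ∉ p` acts on `R ⧸ p` through an object of `𝒳`, so
`IsResolving.of_lift` reduces the claim to `R ⧸ (p + (s))`, all of whose prime factors strictly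
contain `p`. -/
theorem quotient_mem_of_kappaMemAdd [IsNoetherianRing R] {𝒳 : Set (ModuleCat.{0} R)}
    (h : IsResolving R 𝒳) (hκ : ∀ p ∈ catNonfreeLocus R 𝒳, kappaMemAdd R 𝒳 p)
    (p : PrimeSpectrum R) (hp : p ∈ catNonfreeLocus R 𝒳) : Mem 𝒳 (R ⧸ p.asIdeal) := by
  induction hI : p.asIdeal using IsNoetherian.induction generalizing p with
  | hgt I ih =>
  subst hI
  obtain ⟨X, hX, w, g, hw, hgw⟩ := exists_of_kappaMemAdd h p (hκ p hp)
  obtain ⟨s, hs⟩ := Ideal.Quotient.mk_surjective (g w)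
  have hsp : s ∉ p.asIdeal := fun h0 => hgw (hs ▸ Ideal.Quotient.eq_zero_iff_mem.mpr h0)
  let a₀ : (R ⧸ p.asIdeal) →ₗ[R] X :=
    Submodule.liftQ _ (LinearMap.toSpanSingleton R X w) fun c hc => hw c hc
  let g' : (X × R) →ₗ[R] (R ⧸ p.asIdeal) := g.coprod (Submodule.mkQ p.asIdeal)
  have hg' : Function.Surjective g' := fun c => by
    obtain ⟨c, rfl⟩ := Submodule.mkQ_surjective _ c
    exact ⟨(0, c), by simp [g']⟩
  refine h.of_lift g' s (LinearMap.inl R X R ∘ₗ a₀) (fun c => ?_) ?_ ?_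
  · obtain ⟨c, rfl⟩ := Submodule.mkQ_surjective _ c
    have h1 : a₀ (p.asIdeal.mkQ c) = c • w := rfl
    have h2 : g' (LinearMap.inl R X R (c • w)) = c • g w := by simp [g']
    rw [LinearMap.comp_apply, h1, h2, ← hs]
    change Ideal.Quotient.mk _ (c * s) = Ideal.Quotient.mk _ (s * c)
    rw [mul_comm]
  · let D := LinearMap.range (LinearMap.lsmul R (R ⧸ p.asIdeal) s)
    have hD : Mem 𝒳 ((R ⧸ p.asIdeal) ⧸ D) := by
      refine h.of_support _ inferInstance fun q hq => ?_
      have hpq : p.asIdeal ≤ q.asIdeal := fun c hc => hq <| by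
        rw [Module.mem_annihilator]
        intro m
        obtain ⟨m, rfl⟩ := D.mkQ_surjective m
        obtain ⟨m, rfl⟩ := Submodule.mkQ_surjective _ m
        rw [← map_smul, ← map_smul]
        have : p.asIdeal.mkQ (c • m) = 0 :=
          (Submodule.Quotient.mk_eq_zero _).mpr (Ideal.mul_mem_right _ _ hc)
        rw [this, map_zero]
      have hsq : s ∈ q.asIdeal := hq <| by
        rw [Module.mem_annihilator]
        intro m
        obtain ⟨m, rfl⟩ := D.mkQ_surjective m
        rw [← map_smul]
        exact (Submodule.Quotient.mk_eq_zero _).mpr ⟨m, rfl⟩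
      exact ih q.asIdeal (lt_of_le_of_ne hpq fun he => hsp (he ▸ hsq)) q
        (mem_catNonfreeLocus_of_le h hp hpq) rfl
    have := h.ker' (D.mkQ ∘ₗ g') (D.mkQ_surjective.comp hg') (h.prod hX h.ring_mem) hD
    refine h.equiv (LinearEquiv.ofEq _ _ ?_) this
    rw [LinearMap.ker_comp, Submodule.ker_mkQ]
  · have : Subsingleton (LinearMap.ker (LinearMap.lsmul R (R ⧸ p.asIdeal) s)) := by
      refine subsingleton_of_forall_eq 0 fun ⟨c, hc⟩ => Subtype.ext ?_
      obtain ⟨c, rfl⟩ := Ideal.Quotient.mk_surjective c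
      have h1 : Ideal.Quotient.mk p.asIdeal (s * c) = 0 := hc
      rw [Ideal.Quotient.eq_zero_iff_mem] at h1
      exact Ideal.Quotient.eq_zero_iff_mem.mpr ((p.2.mem_or_mem h1).resolve_left hsp)
    exact h.of_subsingleton

end ClearDenominators

/-! ### Depth and Cohen–Macaulay rings -/

section CohenMacaulay

open IsLocalRing RingTheory.Sequence

/-- `M` admits a weakly regular sequence of length `n` inside the maximal ideal; for `M ≠ 0`
this says that the depth of `M` is at least `n`. -/
def DepthGE (R : Type) [CommRing R] [IsLocalRing R] (M : Type) [AddCommGroup M] [Module R M]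
    (n : ℕ) : Prop :=
  ∃ rs : List R, rs.length = n ∧ (∀ r ∈ rs, r ∈ maximalIdeal R) ∧ IsWeaklyRegular M rs

variable {R : Type} [CommRing R]

lemma quotSMulTop_mk_eq_zero {M : Type} [AddCommGroup M] [Module R M] (x : R) (u : M) :
    (Submodule.Quotient.mk u : QuotSMulTop x M) = 0 ↔ ∃ v : M, x • v = u := by
  rw [Submodule.Quotient.mk_eq_zero, Submodule.mem_smul_pointwise_iff_exists]
  simp

variable [IsLocalRing R]

lemma DepthGE.zero (M : Type) [AddCommGroup M] [Module R M] : DepthGE R M 0 :=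
  ⟨[], rfl, by simp, IsWeaklyRegular.nil R M⟩

lemma depthGE_succ_iff {M : Type} [AddCommGroup M] [Module R M] {n : ℕ} :
    DepthGE R M (n + 1) ↔
      ∃ x ∈ maximalIdeal R, IsSMulRegular M x ∧ DepthGE R (QuotSMulTop x M) n := by
  constructor
  · rintro ⟨rs, hl, hm, hw⟩
    obtain ⟨x, rs, rfl⟩ := List.exists_cons_of_length_eq_add_one hl
    rw [isWeaklyRegular_cons_iff] at hw
    exact ⟨x, hm x (by simp), hw.1, rs, by simpa using hl,
      fun r hr => hm r (by simp [hr]), hw.2⟩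
  · rintro ⟨x, hx, hreg, rs, hl, hm, hw⟩
    exact ⟨x :: rs, by simpa using hl, by simpa using ⟨hx, hm⟩,
      (isWeaklyRegular_cons_iff M x rs).2 ⟨hreg, hw⟩⟩

/-- The socle of a module on which some element of the maximal ideal is regular vanishes. -/
lemma eq_zero_of_regular {M : Type} [AddCommGroup M] [Module R M] {y : R}
    (hy : y ∈ maximalIdeal R) (hreg : IsSMulRegular M y) (u : M)
    (hu : ∀ a ∈ maximalIdeal R, a • u = 0) : u = 0 :=
  hreg (by simpa using hu y hy)

lemma IsRegular.toDepthGE {M : Type} [AddCommGroup M] [Module R M] {rs : List R}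
    (hm : ∀ r ∈ rs, r ∈ maximalIdeal R) (h : IsRegular M rs) : DepthGE R M rs.length :=
  ⟨rs, rfl, hm, h.toIsWeaklyRegular⟩

variable [IsNoetherianRing R]

/-- Two modules with zero socle have a common regular element in the maximal ideal, by prime
avoidance. -/
lemma exists_common_regular (M N : Type) [AddCommGroup M] [Module R M] [Module.Finite R M]
    [AddCommGroup N] [Module R N] [Module.Finite R N]
    (hM : ∀ u : M, (∀ a ∈ maximalIdeal R, a • u = 0) → u = 0)
    (hN : ∀ u : N, (∀ a ∈ maximalIdeal R, a • u = 0) → u = 0) :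
    ∃ w ∈ maximalIdeal R, IsSMulRegular M w ∧ IsSMulRegular N w := by
  by_contra! hcon
  have hsub : ((maximalIdeal R : Ideal R) : Set R) ⊆
      ⋃ p ∈ associatedPrimes R M ∪ associatedPrimes R N, ((id p : Ideal R) : Set R) := by
    intro w hw
    rw [Set.biUnion_union]
    by_cases hwM : IsSMulRegular M w
    · right
      have : w ∈ {r : R | IsSMulRegular N r}ᶜ := hcon w hw hwM
      rwa [← biUnion_associatedPrimes_eq_compl_regular] at this
    · left
      have : w ∈ {r : R | IsSMulRegular M r}ᶜ := hwM
      rwa [← biUnion_associatedPrimes_eq_compl_regular] at this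
  have hprime : ∀ p ∈ associatedPrimes R M ∪ associatedPrimes R N, p.IsPrime := by
    rintro p (hp | hp)
    · exact hp.isPrime
    · exact hp.isPrime
  obtain ⟨p, hp, hle⟩ := (Ideal.subset_union_prime_finite
    ((associatedPrimes.finite R M).union (associatedPrimes.finite R N)) 0 0
    (fun i hi _ _ => hprime i hi)).1 hsub
  have key : ∀ (L : Type) [AddCommGroup L] [Module R L],
      (∀ u : L, (∀ a ∈ maximalIdeal R, a • u = 0) → u = 0) → p ∉ associatedPrimes R L := by
    intro L _ _ hL hpL
    obtain ⟨hpp, u, hu⟩ := isAssociatedPrime_iff.1 (AssociatedPrimes.mem_iff.1 hpL)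
    have hu0 : u = 0 := hL u fun a ha => by
      have : a ∈ p := hle ha
      rw [hu, Submodule.mem_colon_singleton] at this
      exact this
    apply hpp.ne_top
    rw [Ideal.eq_top_iff_one, hu, Submodule.mem_colon_singleton, hu0, smul_zero]
    exact Submodule.zero_mem _
  rcases hp with hp | hp
  · exact key M hM hp
  · exact key N hN hp

/-- Cutting by an arbitrary regular element lowers the length of regular sequences by at most
one. -/
lemma DepthGE.quot {n : ℕ} : ∀ {M : Type} [AddCommGroup M] [Module R M] [Module.Finite R M]
    {z : R}, z ∈ maximalIdeal R → IsSMulRegular M z → DepthGE R M (n + 1) →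
    DepthGE R (QuotSMulTop z M) n := by
  induction n with
  | zero => intros; exact DepthGE.zero _
  | succ n ih =>
    intro M _ _ _ z hz hzM hM
    obtain ⟨x, hx, hxM, hMx⟩ := depthGE_succ_iff.1 hM
    obtain ⟨y, hy, hyM, -⟩ := depthGE_succ_iff.1 hMx
    have hsx := fun u : QuotSMulTop x M => eq_zero_of_regular hy hyM u
    -- a socle element of `M/zM` is carried to a socle element of `M/xM` by division
    have hsz : ∀ u : QuotSMulTop z M, (∀ a ∈ maximalIdeal R, a • u = 0) → u = 0 := by
      intro u hu
      obtain ⟨u, rfl⟩ := Submodule.Quotient.mk_surjective _ u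
      have hu' : ∀ a ∈ maximalIdeal R, ∃ v : M, z • v = a • u := fun a ha =>
        (quotSMulTop_mk_eq_zero z _).1 (hu a ha)
      obtain ⟨v, hv⟩ := hu' x hx
      have hv0 : (Submodule.Quotient.mk v : QuotSMulTop x M) = 0 := by
        refine hsx _ fun a ha => ?_
        obtain ⟨t, ht⟩ := hu' a ha
        refine (quotSMulTop_mk_eq_zero x (a • v)).2 ⟨t, hzM ?_⟩
        change z • x • t = z • a • v
        rw [smul_comm z x, ht, smul_comm z a, hv, smul_comm x a]
      obtain ⟨s, hs⟩ := (quotSMulTop_mk_eq_zero x _).1 hv0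
      refine (quotSMulTop_mk_eq_zero z u).2 ⟨s, hxM ?_⟩
      change x • z • s = x • u
      rw [smul_comm x z, hs, hv]
    obtain ⟨w, hw, hwx, hwz⟩ := exists_common_regular _ _ hsx hsz
    have swap : ∀ {a b : R} {k : ℕ}, a ∈ maximalIdeal R → b ∈ maximalIdeal R →
        IsSMulRegular M a → IsSMulRegular (QuotSMulTop a M) b →
        DepthGE R (QuotSMulTop b (QuotSMulTop a M)) k →
        IsSMulRegular M b ∧ IsSMulRegular (QuotSMulTop b M) a ∧
          DepthGE R (QuotSMulTop a (QuotSMulTop b M)) k := by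
      rintro a b k ha hb haM hbM ⟨rs, hl, hm, hw⟩
      have h1 : IsWeaklyRegular M (a :: b :: rs) := by
        rw [isWeaklyRegular_cons_iff, isWeaklyRegular_cons_iff]
        exact ⟨haM, hbM, hw⟩
      have h2 := IsLocalRing.isWeaklyRegular_of_perm_of_subset_maximalIdeal h1
        (List.Perm.swap b a rs) (by simpa using ⟨ha, hb, hm⟩)
      rw [isWeaklyRegular_cons_iff, isWeaklyRegular_cons_iff] at h2
      exact ⟨h2.1, h2.2.1, rs, hl, hm, h2.2.2⟩
    obtain ⟨-, hxw, hd⟩ := swap hx hw hxM hwx (ih hw hwx hMx)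
    obtain ⟨hwM, hzw, -⟩ := swap hz hw hzM hwz (DepthGE.zero _)
    obtain ⟨-, -, hd'⟩ := swap hw hz hwM hzw
      (ih hz hzw (depthGE_succ_iff.2 ⟨x, hx, hxw, hd⟩))
    exact depthGE_succ_iff.2 ⟨w, hw, hwz, hd'⟩

/-- An associated prime of `M` is strictly contained in an associated prime of `M/xM` when `x` is
regular on `M`. -/
lemma exists_associatedPrime_quot {M : Type} [AddCommGroup M] [Module R M] [Module.Finite R M]
    {x : R} (hx : x ∈ maximalIdeal R) (hreg : IsSMulRegular M x) {p : Ideal R}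
    (hp : p ∈ associatedPrimes R M) : ∃ q ∈ associatedPrimes R (QuotSMulTop x M), p < q := by
  obtain ⟨hpp, u, hu⟩ := isAssociatedPrime_iff.1 (AssociatedPrimes.mem_iff.1 hp)
  have hu' : ∀ a, a ∈ p ↔ a • u = 0 := fun a => by
    rw [hu, Submodule.mem_colon_singleton, Submodule.mem_bot]
  have hu0 : u ≠ 0 := by
    rintro rfl
    exact hpp.ne_top ((Ideal.eq_top_iff_one _).2 ((hu' 1).2 (by simp)))
  -- the elements killed by `p`; by Nakayama they are not all divisible by `x`
  let N : Submodule R M :=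
    { carrier := {m | ∀ a ∈ p, a • m = 0}
      zero_mem' := fun a _ => smul_zero a
      add_mem' := fun {m n} hm hn a ha => by rw [smul_add, hm a ha, hn a ha, add_zero]
      smul_mem' := fun c m hm a ha => by rw [smul_comm, hm a ha, smul_zero] }
  have huN : u ∈ N := fun a ha => (hu' a).1 ha
  obtain ⟨m, hmN, hmx⟩ : ∃ m ∈ N, ∀ v : M, x • v ≠ m := by
    by_contra! hcon
    have hle : N ≤ Ideal.span {x} • N := by
      intro m hm
      obtain ⟨v, hv⟩ := hcon m hm
      rw [← hv]
      refine Submodule.smul_mem_smul (Ideal.mem_span_singleton_self x) fun a ha => hreg ?_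
      change x • a • v = x • 0
      rw [smul_comm, hv, hm a ha, smul_zero]
    have hbot := Submodule.eq_bot_of_le_smul_of_le_jacobson_bot (Ideal.span {x}) N
      (IsNoetherian.noetherian N) hle (by
        rw [IsLocalRing.jacobson_eq_maximalIdeal _ bot_ne_top, Ideal.span_singleton_le_iff_mem]
        exact hx)
    rw [hbot] at huN
    exact hu0 huN
  obtain ⟨q, hq, hle⟩ := exists_le_isAssociatedPrime_of_isNoetherianRing R
    (Submodule.Quotient.mk m : QuotSMulTop x M)
    (fun h0 => by obtain ⟨v, hv⟩ := (quotSMulTop_mk_eq_zero x m).1 h0; exact hmx v hv)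
  refine ⟨q, hq, lt_of_le_of_ne (fun a ha => hle ?_) ?_⟩
  · rw [Submodule.mem_colon_singleton, Submodule.mem_bot]
    change (Submodule.Quotient.mk (a • m) : QuotSMulTop x M) = 0
    rw [hmN a ha]; rfl
  · rintro rfl
    have hxp : x ∈ p := hle (by
      rw [Submodule.mem_colon_singleton, Submodule.mem_bot]
      exact (quotSMulTop_mk_eq_zero x (x • m)).2 ⟨m, rfl⟩)
    exact hu0 (hreg (by simpa using (hu' x).1 hxp))

/-- The depth of `M` is at most `dim R ⧸ p` for every associated prime `p` of `M`. -/
lemma DepthGE.le_coheight {n : ℕ} : ∀ {M : Type} [AddCommGroup M] [Module R M]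
    [Module.Finite R M], DepthGE R M n → ∀ p : PrimeSpectrum R,
    p.asIdeal ∈ associatedPrimes R M → (n : ℕ∞) ≤ Order.coheight p := by
  induction n with
  | zero => intros; simp
  | succ n ih =>
    intro M _ _ _ hM p hp
    obtain ⟨x, hx, hxM, hMx⟩ := depthGE_succ_iff.1 hM
    obtain ⟨q, hq, hlt⟩ := exists_associatedPrime_quot hx hxM hp
    have h1 := ih hMx ⟨q, hq.isPrime⟩ hq
    have h2 := Order.coheight_add_one_le (a := (⟨q, hq.isPrime⟩ : PrimeSpectrum R)) (b := p) hlt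
    push_cast
    exact (add_le_add_left h1 1).trans h2

/-- The local ring `R` has a regular sequence of length `d ≥ dim R`: it is Cohen–Macaulay of
dimension `d`. -/
def CMDim (R : Type) [CommRing R] [IsLocalRing R] (d : ℕ) : Prop :=
  DepthGE R R d ∧ ringKrullDim R ≤ d

lemma exists_cmDim (hCM : IsCMLocalRing R) : ∃ d, CMDim R d := by
  unfold IsCMLocalRing at hCM
  have hlt : seqDepth R R < ⊤ := by
    have := ringKrullDim_lt_top (R := R)
    rw [← hCM] at this
    exact WithBot.coe_lt_coe.1 this
  have hne : Nonempty {n : ℕ∞ | ∃ rs : List R, (rs.length : ℕ∞) = n ∧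
      (∀ r ∈ rs, r ∈ maximalIdeal R) ∧ IsRegular R rs} :=
    ⟨⟨0, [], by simp, by simp, IsRegular.nil R R⟩⟩
  obtain ⟨rs, hl, hm, hreg⟩ := ENat.sSup_mem_of_nonempty_of_lt_top hlt
  refine ⟨rs.length, IsRegular.toDepthGE hm hreg, ?_⟩
  rw [← hCM]
  have : seqDepth R R = rs.length := hl.symm
  rw [this]
  rfl

/-- Associated primes of a Cohen–Macaulay local ring are minimal. -/
lemma CMDim.not_lt {d : ℕ} (h : CMDim R d) {p : PrimeSpectrum R}
    (hp : p.asIdeal ∈ associatedPrimes R R) (q : PrimeSpectrum R) : ¬ q < p := by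
  intro hlt
  have h1 := h.1.le_coheight p hp
  have h2 := Order.coheight_add_one_le hlt
  have h3 : (Order.coheight q : WithBot ℕ∞) ≤ d :=
    (Order.coheight_le_krullDim q).trans h.2
  have h4 : Order.coheight q ≤ (d : ℕ∞) := by exact_mod_cast h3
  have h5 : ((d + 1 : ℕ) : ℕ∞) ≤ d := by
    push_cast
    exact (add_le_add_left h1 1).trans (h2.trans h4)
  have : d + 1 ≤ d := by exact_mod_cast h5
  omega

lemma CMDim.quot {d : ℕ} (h : CMDim R d) {z : R} (hz : z ∈ maximalIdeal R)
    (hreg : IsSMulRegular R z) [IsLocalRing (R ⧸ Ideal.span {z})] :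
    ∃ d', d = d' + 1 ∧ CMDim (R ⧸ Ideal.span {z}) d' := by
  have hnzd : z ∈ nonZeroDivisors R := by
    rw [mem_nonZeroDivisors_iff_right]
    intro a ha
    exact hreg (by simpa [mul_comm] using ha)
  have hdim := ringKrullDim_quotient_succ_le_of_nonZeroDivisor hnzd
  have hd := hdim.trans h.2
  have hnn : (0 : WithBot ℕ∞) ≤ ringKrullDim (R ⧸ Ideal.span {z}) :=
    ringKrullDim_nonneg_of_nontrivial
  cases d with
  | zero =>
    exfalso
    have : (0 : WithBot ℕ∞) + 1 ≤ (0 : ℕ) := (add_le_add_left hnn 1).trans hd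
    norm_num at this
  | succ d =>
    refine ⟨d, rfl, ?_, ?_⟩
    · obtain ⟨rs, hl, hm, hw⟩ := h.1.quot hz hreg
      have he : Nonempty (QuotSMulTop z R ≃ₗ[R] R ⧸ Ideal.span {z}) :=
        ⟨Submodule.quotEquivOfEq _ _ (by
          ext a
          rw [Submodule.mem_smul_pointwise_iff_exists, Ideal.mem_span_singleton]
          simp [dvd_def, eq_comm])⟩
      obtain ⟨e⟩ := he
      refine ⟨rs.map (algebraMap R (R ⧸ Ideal.span {z})), by simpa using hl, ?_, ?_⟩
      · intro r hr
        obtain ⟨a, ha, rfl⟩ := List.mem_map.1 hr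
        have : IsLocalHom (algebraMap R (R ⧸ Ideal.span {z})) :=
          IsLocalHom.of_surjective _ Ideal.Quotient.mk_surjective
        rw [mem_maximalIdeal, mem_nonunits_iff, isUnit_map_iff]
        exact hm a ha
      · rw [isWeaklyRegular_map_algebraMap_iff]
        exact (e.isWeaklyRegular_congr rs).1 hw
    · have hd' : ringKrullDim (R ⧸ Ideal.span {z}) + 1 ≤ (d : WithBot ℕ∞) + 1 := by
        simpa using hd
      exact (ENat.WithBot.add_le_add_one_right_iff).1 hd'

end CohenMacaulay

/-! ### Syzygies over a quotient ring -/

section SyzygyMem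

variable {R : Type} [CommRing R] {𝒳 : Set (ModuleCat.{0} R)}

/-- The first syzygy of `N`, formed with some finite free cover, lies in `𝒳`. For resolving `𝒳`
this does not depend on the cover. -/
def SyzMem (𝒳 : Set (ModuleCat.{0} R)) (N : Type) [AddCommGroup N] [Module R N] : Prop :=
  ∃ (n : ℕ) (π : (Fin n → R) →ₗ[R] N), Function.Surjective π ∧ Mem 𝒳 (LinearMap.ker π)

variable {L M N : Type} [AddCommGroup L] [Module R L] [AddCommGroup M] [Module R M]
  [AddCommGroup N] [Module R N]

theorem SyzMem.finite (hN : SyzMem 𝒳 N) : Module.Finite R N := by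
  obtain ⟨n, π, hπ, -⟩ := hN
  exact Module.Finite.of_surjective π hπ

theorem SyzMem.ker_mem (h : IsResolving R 𝒳) (hN : SyzMem 𝒳 N) {Y : Type} [AddCommGroup Y]
    [Module R Y] (g : Y →ₗ[R] N) (hg : Function.Surjective g) (hY : Mem 𝒳 Y) :
    Mem 𝒳 (LinearMap.ker g) := by
  obtain ⟨n, π, hπ, hk⟩ := hN
  exact h.schanuel π g hπ hg (h.free n) hY hk

theorem SyzMem.of_ker_mem (h : IsResolving R 𝒳) {Y : Type} [AddCommGroup Y]
    [Module R Y] (g : Y →ₗ[R] N) (hg : Function.Surjective g) (hY : Mem 𝒳 Y)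
    (hk : Mem 𝒳 (LinearMap.ker g)) : SyzMem 𝒳 N := by
  have := h.finite hY
  have : Module.Finite R N := Module.Finite.of_surjective g hg
  obtain ⟨n, π, hπ⟩ := Module.Finite.exists_fin' R N
  exact ⟨n, π, hπ, h.schanuel g π hg hπ hY (h.free n) hk⟩

theorem SyzMem.of_mem (h : IsResolving R 𝒳) (hN : Mem 𝒳 N) : SyzMem 𝒳 N :=
  SyzMem.of_ker_mem h LinearMap.id Function.surjective_id hN
    (h.ker' LinearMap.id Function.surjective_id hN hN)

theorem SyzMem.equiv (e : M ≃ₗ[R] N) (hM : SyzMem 𝒳 M) : SyzMem 𝒳 N := by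
  obtain ⟨n, π, hπ, hk⟩ := hM
  refine ⟨n, e.toLinearMap ∘ₗ π, e.surjective.comp hπ, ?_⟩
  rwa [LinearEquiv.ker_comp]

theorem SyzMem.summand (h : IsResolving R 𝒳) (i : N →ₗ[R] M) (p : M →ₗ[R] N)
    (hip : ∀ x, p (i x) = x) (hM : SyzMem 𝒳 M) : SyzMem 𝒳 N := by
  have := hM.finite
  have : Module.Finite R N := Module.Finite.of_surjective p fun x => ⟨i x, hip x⟩
  obtain ⟨a, π, hπ⟩ := Module.Finite.exists_fin' R N
  obtain ⟨b, ρ, hρ⟩ := Module.Finite.exists_fin' R M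
  -- a cover of `M = N ⊕ ker p` that is compatible with the decomposition
  let g : ((Fin a → R) × (Fin b → R)) →ₗ[R] M :=
    (i ∘ₗ π).coprod ((LinearMap.id - i ∘ₗ p) ∘ₗ ρ)
  have hg : ∀ w, g w = i (π w.1) + (ρ w.2 - i (p (ρ w.2))) := fun w => by simp [g]
  have hgs : Function.Surjective g := by
    intro m
    obtain ⟨x, hx⟩ := hπ (p m)
    obtain ⟨y, hy⟩ := hρ m
    exact ⟨(x, y), by simp [hg, hx, hy]⟩
  refine ⟨a, π, hπ, h.summand (M := LinearMap.ker g)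
    ((LinearMap.inl R (Fin a → R) (Fin b → R) ∘ₗ (LinearMap.ker π).subtype).codRestrict _ ?_)
    ((LinearMap.fst R (Fin a → R) (Fin b → R) ∘ₗ (LinearMap.ker g).subtype).codRestrict _ ?_)
    (fun x => rfl) (hM.ker_mem h g hgs (h.prod (h.free a) (h.free b)))⟩
  · intro x
    simp [hg]
  · rintro ⟨⟨x, y⟩, hw⟩
    have hw' : i (π x) + (ρ y - i (p (ρ y))) = 0 := (hg (x, y)).symm.trans hw
    have := congrArg p hw'
    simpa [hip] using this

/-- The restriction of a cover of `M` to a cover of a submodule `L`, whose kernel is unchanged. -/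
theorem exists_restricted_cover (f : L →ₗ[R] M) (g : M →ₗ[R] N)
    (hf : Function.Injective f) (hfg : Function.Exact f g) {Y : Type} [AddCommGroup Y]
    [Module R Y] (π : Y →ₗ[R] M) (hπ : Function.Surjective π) :
    ∃ ρ : LinearMap.ker (g ∘ₗ π) →ₗ[R] L, Function.Surjective ρ ∧
      Nonempty (LinearMap.ker ρ ≃ₗ[R] LinearMap.ker π) := by
  have hrange : ∀ y : LinearMap.ker (g ∘ₗ π), π y ∈ LinearMap.range f := fun y =>
    (hfg _).1 y.2
  let e := LinearEquiv.ofInjective f hf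
  let ρ₀ : LinearMap.ker (g ∘ₗ π) →ₗ[R] LinearMap.range f :=
    (π ∘ₗ (LinearMap.ker (g ∘ₗ π)).subtype).codRestrict _ hrange
  have hρ : ∀ y, f ((e.symm.toLinearMap ∘ₗ ρ₀) y) = π y := fun y => by
    have : e (e.symm (ρ₀ y)) = ρ₀ y := e.apply_symm_apply _
    exact congrArg Subtype.val this
  refine ⟨e.symm.toLinearMap ∘ₗ ρ₀, ?_, ⟨?_⟩⟩
  · intro l
    obtain ⟨y, hy⟩ := hπ (f l)
    refine ⟨⟨y, ?_⟩, hf ((hρ _).trans hy)⟩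
    change g (π y) = 0
    rw [hy]
    exact (hfg _).2 ⟨l, rfl⟩
  · have hmem : ∀ y, y ∈ LinearMap.ker (e.symm.toLinearMap ∘ₗ ρ₀) ↔ π y = 0 := fun y => by
      rw [LinearMap.mem_ker, ← hρ, map_eq_zero_iff f hf]
    refine LinearEquiv.ofBijective (((LinearMap.ker (g ∘ₗ π)).subtype ∘ₗ
      (LinearMap.ker (e.symm.toLinearMap ∘ₗ ρ₀)).subtype).codRestrict (LinearMap.ker π)
      fun y => (hmem _).1 y.2) ⟨fun x y hxy => ?_, fun y => ?_⟩
    · exact Subtype.ext (Subtype.ext (congrArg (fun t => t.1) hxy))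
    · have hy : π y = 0 := y.2
      exact ⟨⟨⟨y, by simp [hy]⟩, (hmem _).2 hy⟩, rfl⟩

theorem SyzMem.ext (h : IsResolving R 𝒳) [Module.Finite R M] (f : L →ₗ[R] M) (g : M →ₗ[R] N)
    (hf : Function.Injective f) (hg : Function.Surjective g) (hfg : Function.Exact f g)
    (hL : SyzMem 𝒳 L) (hN : SyzMem 𝒳 N) : SyzMem 𝒳 M := by
  obtain ⟨n, π, hπ⟩ := Module.Finite.exists_fin' R M
  obtain ⟨ρ, hρ, ⟨e⟩⟩ := exists_restricted_cover f g hf hfg π hπ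
  have hK := hN.ker_mem h (g ∘ₗ π) (hg.comp hπ) (h.free n)
  exact ⟨n, π, hπ, h.equiv e (hL.ker_mem h ρ hρ hK)⟩

theorem SyzMem.ker (h : IsResolving R 𝒳) (f : L →ₗ[R] M) (g : M →ₗ[R] N)
    (hf : Function.Injective f) (hg : Function.Surjective g) (hfg : Function.Exact f g)
    (hM : SyzMem 𝒳 M) (hN : SyzMem 𝒳 N) : SyzMem 𝒳 L := by
  obtain ⟨n, π, hπ, hk⟩ := hM
  obtain ⟨ρ, hρ, ⟨e⟩⟩ := exists_restricted_cover f g hf hfg π hπ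
  have hK := hN.ker_mem h (g ∘ₗ π) (hg.comp hπ) (h.free n)
  exact SyzMem.of_ker_mem h ρ hρ hK (h.equiv e.symm hk)

/-- The modules over the `R`-algebra `S` whose first syzygy over `R` lies in `𝒳`. -/
def syzCat (S : Type) [CommRing S] [Algebra R S] (𝒳 : Set (ModuleCat.{0} R)) :
    Set (ModuleCat.{0} S) :=
  {N | ∃ (_ : Module R N) (_ : IsScalarTower R S N), SyzMem 𝒳 N}

theorem mem_syzCat_iff (S : Type) [CommRing S] [Algebra R S] {N : Type} [AddCommGroup N]
    [j : Module R N] [Module S N] [hj : IsScalarTower R S N] :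
    Mem (syzCat S 𝒳) N ↔ SyzMem 𝒳 N := by
  constructor
  · rintro ⟨i, hi, hN⟩
    have hij : i = j := Module.ext (by
      ext r x
      exact (@algebraMap_smul R _ S _ _ N _ _ i hi r x).symm.trans
        (@algebraMap_smul R _ S _ _ N _ _ j hj r x))
    subst hij
    exact hN
  · intro hN
    exact ⟨_, inferInstance, hN⟩

theorem isResolving_syzCat (h : IsResolving R 𝒳) (S : Type) [CommRing S] [Algebra R S]
    (hS : SyzMem 𝒳 S) : IsResolving S (syzCat S 𝒳) where
  fg M hM := by
    obtain ⟨i, hi, hM⟩ := hM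
    have := hM.finite
    exact Module.Finite.of_restrictScalars_finite R S M
  mem_of_iso M N := by
    rintro ⟨e⟩ ⟨i, hi, hM⟩
    let _ : Module R N := Module.compHom N (algebraMap R S)
    have : IsScalarTower R S N := IsScalarTower.of_algebraMap_smul fun _ _ => rfl
    exact ⟨_, this, hM.equiv (e.restrictScalars R)⟩
  ring_mem := (mem_syzCat_iff S).2 hS
  summand_mem M N := by
    rintro ⟨j, p, hjp⟩ ⟨i, hi, hM⟩
    let _ : Module R N := Module.compHom N (algebraMap R S)
    have : IsScalarTower R S N := IsScalarTower.of_algebraMap_smul fun _ _ => rfl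
    exact ⟨_, this, hM.summand h (j.restrictScalars R) (p.restrictScalars R)
      (fun x => LinearMap.congr_fun hjp x)⟩
  extension_mem L M N f g hf hg hfg := by
    rintro ⟨i, hi, hL⟩ ⟨i', hi', hN⟩
    let _ : Module R M := Module.compHom M (algebraMap R S)
    have : IsScalarTower R S M := IsScalarTower.of_algebraMap_smul fun _ _ => rfl
    have := hL.finite
    have := hN.finite
    have : Module.Finite R M := Module.Finite.of_exact (f := f.restrictScalars R)
      (g := g.restrictScalars R) hfg hg
    exact ⟨_, inferInstance, SyzMem.ext h (f.restrictScalars R) (g.restrictScalars R) hf hg hfg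
      hL hN⟩
  ker_epi_mem L M N f g hf hg hfg := by
    rintro ⟨i, hi, hM⟩ ⟨i', hi', hN⟩
    let _ : Module R L := Module.compHom L (algebraMap R S)
    have : IsScalarTower R S L := IsScalarTower.of_algebraMap_smul fun _ _ => rfl
    exact ⟨_, inferInstance, SyzMem.ker h (f.restrictScalars R) (g.restrictScalars R) hf hg hfg
      hM hN⟩

/-- For a regular element `z`, the module `R ⧸ (z)` has a free first syzygy. -/
theorem syzMem_quotient_span (h : IsResolving R 𝒳) {z : R} (hz : IsSMulRegular R z) :
    SyzMem 𝒳 (R ⧸ Ideal.span {z}) := by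
  refine SyzMem.of_ker_mem h (Submodule.mkQ (Ideal.span {z})) (Submodule.mkQ_surjective _)
    h.ring_mem ?_
  rw [Submodule.ker_mkQ]
  refine h.equiv (M := R) (LinearEquiv.ofBijective ((LinearMap.lsmul R R z).codRestrict
    (Ideal.span {z}) fun x => Ideal.mem_span_singleton.2 (Dvd.intro x rfl)) ⟨?_, ?_⟩) h.ring_mem
  · intro x y hxy
    exact hz (congrArg Subtype.val hxy)
  · rintro ⟨y, hy⟩
    obtain ⟨x, rfl⟩ := Ideal.mem_span_singleton.1 hy
    exact ⟨x, rfl⟩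

theorem map_mem_nullIdeal_tensor (S : Type) [CommRing S] [Algebra R S] [Module.Finite R M]
    {s : R} (hs : s ∈ nullIdeal R M) : algebraMap R S s ∈ nullIdeal S (S ⊗[R] M) := by
  obtain ⟨n, a, b, hab⟩ := exists_factor_of_mem_nullIdeal hs
  refine mem_nullIdeal_of_factor (a.baseChange S) (b.baseChange S) fun m => ?_
  induction m with
  | zero => simp
  | add x y hx hy => rw [map_add, map_add, hx, hy, smul_add]
  | tmul x y => simp [hab, TensorProduct.tmul_smul]

end SyzygyMem

/-! ### Modules with nonfree locus in a specialization-closed set -/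

section Reduction

variable {R : Type} [CommRing R]

/-- Over a Noetherian ring, some element outside a minimal prime `p` is killed by a power of every
element of `p`, uniformly. -/
theorem exists_notMem_pow_mul_eq_zero [IsNoetherianRing R] (p : Ideal R) [hp : p.IsPrime]
    (hmin : ∀ q : Ideal R, q.IsPrime → q ≤ p → q = p) :
    ∃ t ∉ p, ∃ n : ℕ, ∀ a ∈ p, a ^ n * t = 0 := by
  classical
  have hfin := minimalPrimes.finite_of_isNoetherianRing R
  let s : Finset (Ideal R) := hfin.toFinset.erase p
  have hs : ¬ s.inf id ≤ p := by
    intro hle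
    obtain ⟨q, hq, hqp⟩ := (Ideal.IsPrime.inf_le' hp).1 hle
    rw [Finset.mem_erase, Set.Finite.mem_toFinset] at hq
    exact hq.1 (hmin q hq.2.1.1 hqp)
  obtain ⟨b, hb, hbp⟩ := SetLike.not_le_iff_exists.1 hs
  obtain ⟨n, hn⟩ := IsNoetherianRing.isNilpotent_nilradical R
  refine ⟨b ^ n, fun h => hbp (hp.mem_of_pow_mem n h), n, fun a ha => ?_⟩
  have hab : a * b ∈ nilradical R := by
    rw [nilradical, ← Ideal.sInf_minimalPrimes, Ideal.mem_sInf]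
    intro q hq
    by_cases hqp : q = p
    · exact Ideal.mul_mem_right _ _ (hqp ▸ ha)
    · refine Ideal.mul_mem_left _ _ ?_
      have hqs : q ∈ s := Finset.mem_erase.2 ⟨hqp, hfin.mem_toFinset.2 hq⟩
      exact (Finset.inf_le hqs : s.inf id ≤ q) hb
  have := Ideal.pow_mem_pow hab n
  rw [hn] at this
  rw [← mul_pow]
  exact this

/-- The ideal of ring elements whose support is contained in `Φ`. -/
def supportIdeal (Φ : Set (PrimeSpectrum R)) : Ideal R where
  carrier := {t | ∀ p : PrimeSpectrum R, p ∉ Φ → ∃ c ∉ p.asIdeal, c * t = 0}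
  zero_mem' p _ := ⟨1, p.asIdeal.ne_top_iff_one.1 p.2.ne_top, mul_zero 1⟩
  add_mem' := by
    intro s t hs ht p hp
    obtain ⟨c, hc, hcs⟩ := hs p hp
    obtain ⟨c', hc', hct⟩ := ht p hp
    refine ⟨c * c', fun h => (p.2.mem_or_mem h).elim hc hc', ?_⟩
    linear_combination c' * hcs + c * hct
  smul_mem' := by
    intro a t ht p hp
    obtain ⟨c, hc, hct⟩ := ht p hp
    refine ⟨c, hc, ?_⟩
    rw [smul_eq_mul]
    linear_combination a * hct

theorem exists_mul_supportIdeal_eq_zero [IsNoetherianRing R] (Φ : Set (PrimeSpectrum R))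
    {p : PrimeSpectrum R} (hp : p ∉ Φ) :
    ∃ c ∉ p.asIdeal, ∀ t ∈ supportIdeal Φ, c * t = 0 := by
  obtain ⟨c, hc, hct⟩ := exists_uniform_smul_mem p.asIdeal.primeCompl
    (Submodule.subtype (supportIdeal Φ)) ⊥ (fun t => by
      obtain ⟨c, hc, h0⟩ := t.2 p hp
      exact ⟨c, hc, h0⟩)
  exact ⟨c, hc, fun t ht => hct ⟨t, ht⟩⟩

/-- Factoring out the part of `M` supported on `Φ` keeps the nonfree locus inside `Φ`. -/
theorem mem_of_nullIdeal_quotient_le [IsNoetherianRing R] (Φ : Set (PrimeSpectrum R))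
    {M : Type} [AddCommGroup M] [Module R M] [Module.Finite R M]
    (hM : ∀ p : PrimeSpectrum R, nullIdeal R M ≤ p.asIdeal → p ∈ Φ) (p : PrimeSpectrum R)
    (hp : nullIdeal R (M ⧸ (supportIdeal Φ • ⊤ : Submodule R M)) ≤ p.asIdeal) : p ∈ Φ := by
  by_contra hpΦ
  obtain ⟨c, hc, hct⟩ := exists_mul_supportIdeal_eq_zero Φ hpΦ
  refine hpΦ (hM p fun s hs => ?_)
  have hle : (supportIdeal Φ • ⊤ : Submodule R M) ≤ LinearMap.ker (LinearMap.lsmul R M c) := by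
    rw [Submodule.smul_le]
    intro t ht m _
    change c • t • m = 0
    rw [smul_smul, hct t ht, zero_smul]
  have hsc := hp (mul_mem_nullIdeal hs (Submodule.liftQ _ (LinearMap.lsmul R M c) hle)
    (Submodule.mkQ _) (t := c) (fun x => by
      obtain ⟨x, rfl⟩ := Submodule.mkQ_surjective _ x
      simp))
  exact (p.2.mem_or_mem hsc).resolve_right hc

theorem supportIdeal_le_nullIdeal_quotient (Φ : Set (PrimeSpectrum R)) (M : Type)
    [AddCommGroup M] [Module R M] :
    supportIdeal Φ ≤ nullIdeal R (M ⧸ (supportIdeal Φ • ⊤ : Submodule R M)) := by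
  intro t ht
  refine mem_nullIdeal_of_factor (F := Fin 0 → R) 0 0 fun x => ?_
  obtain ⟨x, rfl⟩ := Submodule.mkQ_surjective _ x
  rw [← map_smul, LinearMap.zero_apply, eq_comm, Submodule.mkQ_apply, Submodule.Quotient.mk_eq_zero]
  exact Submodule.smul_mem_smul ht Submodule.mem_top

/-- The `z`-torsion of `M` is killed by `nullIdeal R M` when `z` is regular on `R`. -/
theorem nullIdeal_le_annihilator_torsion {M : Type} [AddCommGroup M] [Module R M]
    [Module.Finite R M] {z : R} (hz : IsSMulRegular R z) :
    nullIdeal R M ≤ Module.annihilator R (LinearMap.ker (LinearMap.lsmul R M z)) := by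
  intro s hs
  rw [Module.mem_annihilator]
  rintro ⟨m, hm⟩
  obtain ⟨n, a, b, hab⟩ := exists_factor_of_mem_nullIdeal hs
  have hm' : z • m = 0 := hm
  have ham : a m = 0 := by
    funext i
    refine hz ?_
    have := congrFun (congrArg a hm') i
    rw [map_smul, map_zero] at this
    exact this.trans (smul_zero z).symm
  refine Subtype.ext ?_
  change s • m = 0
  rw [← hab, ham, map_zero]

variable [IsNoetherianRing R] [IsLocalRing R]

/-- An ideal consisting of zero divisors lies in an associated prime `p`, which is minimal over a
Cohen–Macaulay ring. If `p ∈ Φ`, then some element outside `p` has support in `Φ`. -/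
theorem exists_regular_mem_nullIdeal {d : ℕ} (hd : CMDim R d) {Φ : Set (PrimeSpectrum R)}
    (hup : SpecClosed R Φ) (I : Ideal R) (hI : supportIdeal Φ ≤ I)
    (hIΦ : ∀ p : PrimeSpectrum R, I ≤ p.asIdeal → p ∈ Φ) : ∃ z ∈ I, IsSMulRegular R z := by
  by_contra! hcon
  have hsub : (I : Set R) ⊆ ⋃ p ∈ associatedPrimes R R, ((id p : Ideal R) : Set R) := by
    intro w hw
    have : w ∈ {r : R | IsSMulRegular R r}ᶜ := hcon w hw
    rwa [← biUnion_associatedPrimes_eq_compl_regular] at this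
  obtain ⟨p, hp, hle⟩ := (Ideal.subset_union_prime_finite (associatedPrimes.finite R R) 0 0
    (fun i hi _ _ => IsAssociatedPrime.isPrime hi)).1 hsub
  have hpp : p.IsPrime := IsAssociatedPrime.isPrime hp
  have hpΦ : (⟨p, hpp⟩ : PrimeSpectrum R) ∈ Φ := hIΦ ⟨p, hpp⟩ hle
  obtain ⟨t, ht, n, hn⟩ := exists_notMem_pow_mul_eq_zero p (fun q hq hqp => by
    by_contra hne
    exact hd.not_lt (p := ⟨p, hpp⟩) hp ⟨q, hq⟩
      (lt_of_le_of_ne hqp fun h => hne (congrArg PrimeSpectrum.asIdeal h)))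
  refine ht (hle (hI fun q hq => ?_))
  by_contra! hcon'
  refine hq (hup _ hpΦ q fun a ha => ?_)
  by_contra haq
  exact hcon' (a ^ n) (fun h => haq (q.2.mem_of_pow_mem n h)) (hn a ha)

end Reduction

theorem quotient_mem_syzCat {R : Type} [CommRing R] {𝒳 : Set (ModuleCat.{0} R)}
    (h : IsResolving R 𝒳) (S : Type) [CommRing S] [Algebra R S]
    (hS : Function.Surjective (algebraMap R S)) (I : Ideal S)
    (hI : Mem 𝒳 (R ⧸ I.comap (algebraMap R S))) : Mem (syzCat S 𝒳) (S ⧸ I) := by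
  rw [mem_syzCat_iff]
  refine SyzMem.of_ker_mem h (Algebra.linearMap R (S ⧸ I))
    (Ideal.Quotient.mk_surjective.comp hS) h.ring_mem ?_
  have hk := h.ker' (Submodule.mkQ (I.comap (algebraMap R S)))
    (Submodule.mkQ_surjective _) h.ring_mem hI
  refine h.equiv (LinearEquiv.ofEq _ _ ?_) hk
  rw [Submodule.ker_mkQ]
  ext x
  rw [LinearMap.mem_ker, Ideal.mem_comap, Algebra.linearMap_apply]
  exact Ideal.Quotient.eq_zero_iff_mem.symm

/-- Suppose that over `S` every module with nonfree locus in a suitable set lies in `syzCat S 𝒳`.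
This applies to `S ⊗ M`, because the hypotheses on `R`, `𝒳`, `Φ` and `M` pass to `S`,
`syzCat S 𝒳`, the preimage of `Φ` in `Spec S` and `S ⊗ M`, for a quotient ring `S` of `R`. -/
theorem tensor_mem_syzCat {R : Type} [CommRing R] {𝒳 : Set (ModuleCat.{0} R)}
    (h : IsResolving R 𝒳) (S : Type) [CommRing S] [Algebra R S]
    (hS : Function.Surjective (algebraMap R S)) {Φ : Set (PrimeSpectrum R)}
    (hup : SpecClosed R Φ) (hΦ : ∀ p ∈ Φ, Mem 𝒳 (R ⧸ p.asIdeal)) (M : Type) [AddCommGroup M]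
    [Module R M] [Module.Finite R M]
    (hM : ∀ p : PrimeSpectrum R, nullIdeal R M ≤ p.asIdeal → p ∈ Φ)
    (ih : ∀ {Ψ : Set (PrimeSpectrum S)}, SpecClosed S Ψ →
      (∀ p ∈ Ψ, Mem (syzCat S 𝒳) (S ⧸ p.asIdeal)) → ∀ (N : Type) [AddCommGroup N]
      [Module S N] [Module.Finite S N],
      (∀ p : PrimeSpectrum S, nullIdeal S N ≤ p.asIdeal → p ∈ Ψ) → Mem (syzCat S 𝒳) N) :
    Mem (syzCat S 𝒳) (S ⊗[R] M) := by
  let c : PrimeSpectrum S → PrimeSpectrum R := PrimeSpectrum.comap (algebraMap R S)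
  have hup' : SpecClosed S (c ⁻¹' Φ) := fun p hp q hpq =>
    hup (c p) hp (c q) (Ideal.comap_mono hpq)
  refine ih hup' (fun p hp => ?_) _ (fun p hp => ?_)
  · exact quotient_mem_syzCat h S hS p.asIdeal (hΦ (c p) hp)
  · exact hM (c p) fun s hs => hp (map_mem_nullIdeal_tensor S hs)

/-- The inductive step: when a regular element `z` acts on `M` through a free module, it suffices
that `M / zM` has its first syzygy in `𝒳`, by the pullback argument of `IsResolving.of_lift`. -/
theorem mem_of_nullIdeal_regular {R : Type} [CommRing R] [IsNoetherianRing R]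
    {𝒳 : Set (ModuleCat.{0} R)} (h : IsResolving R 𝒳) {Φ : Set (PrimeSpectrum R)}
    (hΦ : ∀ p ∈ Φ, Mem 𝒳 (R ⧸ p.asIdeal)) {M : Type} [AddCommGroup M] [Module R M]
    [Module.Finite R M] (hM : ∀ p : PrimeSpectrum R, nullIdeal R M ≤ p.asIdeal → p ∈ Φ)
    {z : R} (hz : z ∈ nullIdeal R M) (hreg : IsSMulRegular R z)
    (hmod : Mem (syzCat (R ⧸ Ideal.span {z}) 𝒳) ((R ⧸ Ideal.span {z}) ⊗[R] M)) : Mem 𝒳 M := by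
  rw [mem_syzCat_iff] at hmod
  obtain ⟨n, g, hg⟩ := Module.Finite.exists_fin' R M
  obtain ⟨a, ha⟩ := exists_lift_of_mem_nullIdeal hz g hg
  refine h.of_lift g z a ha ?_ (h.of_support _ inferInstance fun p hp =>
    hΦ p (hM p ((nullIdeal_le_annihilator_torsion hreg).trans hp)))
  let e := TensorProduct.quotTensorEquivQuotSMul M (Ideal.span {z})
  have hk := (hmod.equiv e).ker_mem h ((Submodule.mkQ _) ∘ₗ g)
    ((Submodule.mkQ_surjective _).comp hg) (h.free n)
  refine h.equiv (LinearEquiv.ofEq _ _ ?_) hk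
  rw [LinearMap.ker_comp, Submodule.ker_mkQ]
  congr 1
  ext m
  rw [Submodule.ideal_span_singleton_smul, Submodule.mem_smul_pointwise_iff_exists]
  simp

/-- Over a Cohen–Macaulay local ring, a resolving subcategory containing `R ⧸ p` for all `p` in a
specialization-closed set `Φ` contains every finitely generated module with nonfree locus inside
`Φ`. -/
theorem mem_of_nullIdeal (d : ℕ) : ∀ (R : Type) [CommRing R] [IsNoetherianRing R] [IsLocalRing R]
    (_ : CMDim R d) {𝒳 : Set (ModuleCat.{0} R)} (_ : IsResolving R 𝒳) {Φ : Set (PrimeSpectrum R)}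
    (_ : SpecClosed R Φ) (_ : ∀ p ∈ Φ, Mem 𝒳 (R ⧸ p.asIdeal)) (M : Type) [AddCommGroup M]
    [Module R M] [Module.Finite R M]
    (_ : ∀ p : PrimeSpectrum R, nullIdeal R M ≤ p.asIdeal → p ∈ Φ), Mem 𝒳 M := by
  induction d using Nat.strong_induction_on with
  | _ d ih =>
  intro R _ _ _ hd 𝒳 h Φ hup hΦ M _ _ _ hM
  let J := supportIdeal Φ
  -- the submodule `JM` is supported on `Φ`, so that only `M / JM` matters
  have hJ : Mem 𝒳 (J • ⊤ : Submodule R M) := by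
    refine h.of_support _ inferInstance fun p hp => hΦ p ?_
    by_contra hpΦ
    obtain ⟨c, hc, hct⟩ := exists_mul_supportIdeal_eq_zero Φ hpΦ
    refine hc (hp ?_)
    have hle : (J • ⊤ : Submodule R M) ≤ LinearMap.ker (LinearMap.lsmul R M c) := by
      rw [Submodule.smul_le]
      intro t ht m _
      change c • t • m = 0
      rw [smul_smul, hct t ht, zero_smul]
    rw [Module.mem_annihilator]
    exact fun m => Subtype.ext (hle m.2)
  refine h.ext (J • ⊤ : Submodule R M).subtype (J • ⊤ : Submodule R M).mkQ
    (Submodule.subtype_injective _) (Submodule.mkQ_surjective _)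
    (LinearMap.exact_subtype_mkQ _) hJ ?_
  suffices key : ∀ (M' : Type) [AddCommGroup M'] [Module R M'] [Module.Finite R M'],
      (∀ p : PrimeSpectrum R, nullIdeal R M' ≤ p.asIdeal → p ∈ Φ) → J ≤ nullIdeal R M' →
      Mem 𝒳 M' from
    key _ (mem_of_nullIdeal_quotient_le Φ hM) (supportIdeal_le_nullIdeal_quotient Φ M)
  intro M' _ _ _ hM' hJM'
  by_cases htop : nullIdeal R M' = ⊤
  · exact h.of_nullIdeal_eq_top htop
  obtain ⟨z, hz, hreg⟩ := exists_regular_mem_nullIdeal hd hup _ hJM' hM'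
  have hzm : z ∈ IsLocalRing.maximalIdeal R := IsLocalRing.le_maximalIdeal htop hz
  have hne : Ideal.span {z} ≠ ⊤ := fun ht => by
    rw [Ideal.span_singleton_eq_top] at ht
    exact hzm ht
  have : Nontrivial (R ⧸ Ideal.span {z}) := Ideal.Quotient.nontrivial_iff.2 hne
  have : IsLocalRing (R ⧸ Ideal.span {z}) :=
    IsLocalRing.of_surjective' (Ideal.Quotient.mk (Ideal.span {z})) Ideal.Quotient.mk_surjective
  obtain ⟨d', rfl, hd'⟩ := hd.quot hzm hreg
  refine mem_of_nullIdeal_regular h hΦ hM' hz hreg ?_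
  exact tensor_mem_syzCat h _ Ideal.Quotient.mk_surjective hup hΦ M' hM' fun hup' hΦ' N _ _ _ hN =>
    ih d' (Nat.lt_succ_self d') (R ⧸ Ideal.span {z}) hd'
      (isResolving_syzCat h _ (syzMem_quotient_span h hreg)) hup' hΦ' N hN

section Final

variable {R : Type} [CommRing R] [IsNoetherianRing R] {𝒳 : Set (ModuleCat.{0} R)}

theorem mem_catNonfreeLocus_of_nullIdeal_le (h : IsResolving R 𝒳) {M : ModuleCat.{0} R}
    (hM : M ∈ 𝒳) {p : PrimeSpectrum R} (hp : nullIdeal R M ≤ p.asIdeal) :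
    p ∈ catNonfreeLocus R 𝒳 := by
  have := h.fg M hM
  exact Set.mem_biUnion hM ((mem_nonfreeLocus_iff p).2 hp)

variable [IsLocalRing R]

theorem mem_of_nonfreeLocus_subset (hCM : IsCMLocalRing R) (h : IsResolving R 𝒳)
    (h3 : ∀ p ∈ catNonfreeLocus R 𝒳, Mem 𝒳 (R ⧸ p.asIdeal)) (M : Type) [AddCommGroup M]
    [Module R M] [Module.Finite R M]
    (hM : ∀ p : PrimeSpectrum R, nullIdeal R M ≤ p.asIdeal → p ∈ catNonfreeLocus R 𝒳) :
    Mem 𝒳 M := by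
  obtain ⟨d, hd⟩ := exists_cmDim hCM
  exact mem_of_nullIdeal d R hd h (fun p hp q hpq => mem_catNonfreeLocus_of_le h hp hpq) h3 M hM

theorem closedUnderTensor_of_quotient_mem (hCM : IsCMLocalRing R) (h : IsResolving R 𝒳)
    (h3 : ∀ p ∈ catNonfreeLocus R 𝒳, Mem 𝒳 (R ⧸ p.asIdeal)) : ClosedUnderTensor R 𝒳 := by
  intro X hX Y hY
  have := h.fg X hX
  have := h.fg Y hY
  refine mem_of_nonfreeLocus_subset hCM h h3 _ fun p hp => ?_
  by_cases hXp : nullIdeal R X ≤ p.asIdeal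
  · exact mem_catNonfreeLocus_of_nullIdeal_le h hX hXp
  · obtain ⟨s, hs, hsp⟩ := SetLike.not_le_iff_exists.1 hXp
    refine mem_catNonfreeLocus_of_nullIdeal_le h hY fun t ht => ?_
    exact (p.2.mem_or_mem (hp (nullIdeal_tensor hs ht))).resolve_left hsp

theorem closedUnderTranspose_of_quotient_mem (hCM : IsCMLocalRing R) (h : IsResolving R 𝒳)
    (h3 : ∀ p ∈ catNonfreeLocus R 𝒳, Mem 𝒳 (R ⧸ p.asIdeal)) : ClosedUnderTranspose R 𝒳 := by
  rintro M hM T ⟨n, m, dl, π, hπ, hexact, -, -, ⟨e⟩⟩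
  let q := (LinearMap.range (flipMap dl)).mkQ
  have hq : Function.Surjective q := Submodule.mkQ_surjective _
  have hle := nullIdeal_le_flip dl π hπ hexact q hq (exact_mkQ_range _)
  obtain ⟨e'⟩ := nonempty_coker_equiv dl R q hq (exact_mkQ_range _)
  refine h.equiv (e ≪≫ₗ e' ≪≫ₗ TensorProduct.lid R _).symm
    (mem_of_nonfreeLocus_subset hCM h h3 _ fun p hp => ?_)
  exact mem_catNonfreeLocus_of_nullIdeal_le h hM (hle.trans hp)

end Final

/-- For a resolving subcategory `𝒳` over a Cohen-Macaulay local ring, the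
following are equivalent: (1) `𝒳` is closed under tensor products and transposes; (2) `𝒳` is
closed under `tr_X (-)` for all `X ∈ 𝒳`; (3) `R/p ∈ 𝒳` for all `p ∈ V(𝒳)`;
(4) `κ(p) ∈ add_{R_p} 𝒳_p` for all `p ∈ V(𝒳)`. -/
theorem tensor_transpose_tfae
    (R : Type) [CommRing R] [IsNoetherianRing R] [IsLocalRing R]
    (hCM : IsCMLocalRing R)
    (𝒳 : Set (ModuleCat.{0} R)) (h𝒳 : IsResolving R 𝒳) :
    ((ClosedUnderTensor R 𝒳 ∧ ClosedUnderTranspose R 𝒳) ↔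
      (∀ X ∈ 𝒳, ∀ M ∈ 𝒳, ∀ T : ModuleCat.{0} R, IsTransposeOf R X M T → T ∈ 𝒳)) ∧
    ((ClosedUnderTensor R 𝒳 ∧ ClosedUnderTranspose R 𝒳) ↔
      (∀ p ∈ catNonfreeLocus R 𝒳, ModuleCat.of R (R ⧸ p.asIdeal) ∈ 𝒳)) ∧
    ((ClosedUnderTensor R 𝒳 ∧ ClosedUnderTranspose R 𝒳) ↔
      (∀ p ∈ catNonfreeLocus R 𝒳, kappaMemAdd R 𝒳 p)) := by
  have h12 : (ClosedUnderTensor R 𝒳 ∧ ClosedUnderTranspose R 𝒳) →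
      (∀ X ∈ 𝒳, ∀ M ∈ 𝒳, ∀ T : ModuleCat.{0} R, IsTransposeOf R X M T → T ∈ 𝒳) :=
    fun h1 => transpose_of_tensor h𝒳 h1.1 h1.2
  have h14 : (ClosedUnderTensor R 𝒳 ∧ ClosedUnderTranspose R 𝒳) →
      (∀ p ∈ catNonfreeLocus R 𝒳, kappaMemAdd R 𝒳 p) :=
    fun h1 p hp => kappaMemAdd_of_transpose h𝒳 (h12 h1) p hp
  have h43 : (∀ p ∈ catNonfreeLocus R 𝒳, kappaMemAdd R 𝒳 p) →
      (∀ p ∈ catNonfreeLocus R 𝒳, ModuleCat.of R (R ⧸ p.asIdeal) ∈ 𝒳) :=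
    fun h4 p hp => quotient_mem_of_kappaMemAdd h𝒳 h4 p hp
  have h31 : (∀ p ∈ catNonfreeLocus R 𝒳, ModuleCat.of R (R ⧸ p.asIdeal) ∈ 𝒳) →
      (ClosedUnderTensor R 𝒳 ∧ ClosedUnderTranspose R 𝒳) :=
    fun h3 => ⟨closedUnderTensor_of_quotient_mem hCM h𝒳 h3,
      closedUnderTranspose_of_quotient_mem hCM h𝒳 h3⟩
  exact ⟨⟨h12, tensor_of_transpose h𝒳⟩, ⟨fun h1 => h43 (h14 h1), h31⟩,
    ⟨h14, fun h4 => h31 (h43 h4)⟩⟩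

end
end
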